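/- arXiv:2411.14138 — 2 statements merged into one kernel-verified Lean document; each statement's English description precedes it below -/
import Mathlib

section
/- Let F be a strictly 1-balanced graph with s = e(F) ≥ 1 edges on r = v(F) ≥ 2 vertices, and set p* = ((aut(F)/r!) · ln(n) / C(n−1, r−1))^{1/s}. Then p* is a sharp threshold for the disappearance of F-isolated vertices in G(n,p): for every fixed ε > 0, if p = p(n) ≤ (1−ε)p* then with probability tending to 1 as n → ∞ some vertex of G(n,p) is contained in no copy of F, and if p = p(n) ≥ (1+ε)p* then with probability tending to 1 every vertex of G(n,p) is contained in a copy of F. -/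
open scoped Classical
open Filter Asymptotics

noncomputable section

/-! ### Basic graph quantities -/

/-- The number of edges of a simple graph. -/
def edgeCnt {V : Type*} (G : SimpleGraph V) : ℕ := G.edgeSet.ncard

/-- The 1-density `e(F)/(v(F)-1)` of a graph `F` on `r` vertices. -/
def d1 {r : ℕ} (F : SimpleGraph (Fin r)) : ℝ := (edgeCnt F : ℝ) / ((r : ℝ) - 1)

/-- `F` is strictly 1-balanced: every proper subgraph `S` with at least 2 vertices and at
least one edge satisfies `d₁(S) < d₁(F)`. -/
def Strictly1Balanced {r : ℕ} (F : SimpleGraph (Fin r)) : Prop :=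
  ∀ S : F.Subgraph, S ≠ ⊤ → 2 ≤ S.verts.ncard → 1 ≤ S.edgeSet.ncard →
    (S.edgeSet.ncard : ℝ) / ((S.verts.ncard : ℝ) - 1) < d1 F

/-- The number of automorphisms of `F`. -/
def autCard {r : ℕ} (F : SimpleGraph (Fin r)) : ℕ := Nat.card (F ≃g F)

/-! ### Copies of `F` in a graph, `F`-factors, `F`-isolated vertices -/

/-- `φ` is a copy of `F` in `G` (an embedding of `F` as a not necessarily induced subgraph). -/
def IsCopyIn {r n : ℕ} (F : SimpleGraph (Fin r)) (G : SimpleGraph (Fin n))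
    (φ : Fin r ↪ Fin n) : Prop :=
  ∀ u v, F.Adj u v → G.Adj (φ u) (φ v)

/-- `G` contains an `F`-factor: pairwise vertex-disjoint copies of `F` covering all vertices. -/
def HasFFactor {r n : ℕ} (F : SimpleGraph (Fin r)) (G : SimpleGraph (Fin n)) : Prop :=
  ∃ Φ : Finset (Fin r ↪ Fin n),
    (∀ φ ∈ Φ, IsCopyIn F G φ) ∧
    (∀ φ ∈ Φ, ∀ ψ ∈ Φ, φ ≠ ψ → ∀ x : Fin n, ¬(x ∈ Set.range φ ∧ x ∈ Set.range ψ)) ∧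
    (∀ x : Fin n, ∃ φ ∈ Φ, x ∈ Set.range φ)

/-- Vertex `x` is `F`-isolated in `G`: no copy of `F` in `G` contains `x`. -/
def FIsolated {r n : ℕ} (F : SimpleGraph (Fin r)) (G : SimpleGraph (Fin n)) (x : Fin n) : Prop :=
  ∀ φ : Fin r ↪ Fin n, IsCopyIn F G φ → x ∉ Set.range φ

/-! ### The random graph `G(n,p)` -/

/-- Probability of the event `P` in the Erdős–Rényi random graph `G(n,p)`. -/
def gnpProb (n : ℕ) (p : ℝ) (P : SimpleGraph (Fin n) → Prop) : ℝ :=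
  ∑ G : SimpleGraph (Fin n),
    if P G then p ^ edgeCnt G * (1 - p) ^ (n.choose 2 - edgeCnt G) else 0

/-- The sharp threshold `p* = ((aut F / r!) · ln n / C(n-1, r-1))^(1/e(F))`. -/
def pstar {r : ℕ} (F : SimpleGraph (Fin r)) (n : ℕ) : ℝ :=
  ((autCard F : ℝ) / (r.factorial : ℝ) * Real.log n / ((n - 1).choose (r - 1) : ℝ)) ^
    ((1 : ℝ) / (edgeCnt F : ℝ))

/-! ### `F`-edges and `F`-graphs -/

/-- An `F`-edge: a pair (vertex set, edge set); the copies of `F` among these are singled out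
by `FEdge.IsCopyOf`. -/
abbrev FEdge (V : Type*) := Finset V × Finset (Sym2 V)

/-- `h` is a copy of `F` with vertices in `V`. -/
def FEdge.IsCopyOf {r : ℕ} {V : Type*} (h : FEdge V) (F : SimpleGraph (Fin r)) : Prop :=
  ∃ φ : Fin r → V, Function.Injective φ ∧ (↑h.1 : Set V) = Set.range φ ∧
    (↑h.2 : Set (Sym2 V)) = Sym2.map φ '' F.edgeSet

/-- An `F`-graph: a vertex set together with a set of `F`-edges. -/
abbrev FGraph (V : Type*) := Finset V × Finset (FEdge V)

/-- Well-formedness of an `F`-graph w.r.t. `F`: every `F`-edge is a copy of `F` with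
vertices inside the vertex set. -/
def FGraph.Wf {r : ℕ} {V : Type*} (H : FGraph V) (F : SimpleGraph (Fin r)) : Prop :=
  ∀ h ∈ H.2, FEdge.IsCopyOf h F ∧ h.1 ⊆ H.1

/-- The edge set of the shadow graph of an `F`-graph. -/
def shadowEdges {V : Type*} [DecidableEq V] (H : FGraph V) : Finset (Sym2 V) :=
  H.2.sup Prod.snd

/-- The shadow graph of an `F`-graph. -/
def shadow {V : Type*} [DecidableEq V] (H : FGraph V) : SimpleGraph V :=
  SimpleGraph.fromEdgeSet ↑(shadowEdges H)

/-- Number of connected components of the shadow graph of `H` (on the vertex set of `H`). -/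
def compCount {V : Type*} [DecidableEq V] (H : FGraph V) : ℕ :=
  Nat.card ((shadow H).induce (↑H.1 : Set V)).ConnectedComponent

/-- An `F`-graph is connected if its shadow graph is. -/
def FGraphConnected {V : Type*} [DecidableEq V] (H : FGraph V) : Prop :=
  ((shadow H).induce (↑H.1 : Set V)).Connected

/-- The nullity `n(H) = (r-1)e(H) + c(H) - v(H)` of an `F`-graph. -/
def nullity (r : ℕ) {V : Type*} [DecidableEq V] (H : FGraph V) : ℤ :=
  ((r : ℤ) - 1) * H.2.card + compCount H - H.1.card

/-- An avoidable configuration: a connected `F`-graph of nullity at least 2. -/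
def Avoidable {r : ℕ} {V : Type*} [DecidableEq V] (F : SimpleGraph (Fin r))
    (H : FGraph V) : Prop :=
  FGraph.Wf H F ∧ FGraphConnected H ∧ 2 ≤ nullity r H

/-- The `F`-edge `h` is induced by the `F`-graph `H`: it is a copy of `F`, not an `F`-edge of
`H`, but all its edges lie in the shadow graph of `H`. -/
def InducedBy {r : ℕ} {V : Type*} [DecidableEq V] (F : SimpleGraph (Fin r)) (h : FEdge V)
    (H : FGraph V) : Prop :=
  FEdge.IsCopyOf h F ∧ h ∉ H.2 ∧ h.2 ⊆ shadowEdges H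

/-- `C` is a clean `F`-cycle of length `k`. -/
def IsCleanCycleOfLen {r : ℕ} {V : Type*} [DecidableEq V] (F : SimpleGraph (Fin r))
    (C : FGraph V) (k : ℕ) : Prop :=
  FGraph.Wf C F ∧ C.1 = C.2.sup Prod.fst ∧
  ((k = 2 ∧ ∃ h₁ h₂ : FEdge V, h₁ ≠ h₂ ∧ C.2 = {h₁, h₂} ∧ (h₁.1 ∩ h₂.1).card = 2) ∨
   (3 ≤ k ∧ ∃ h : Fin k → FEdge V, Function.Injective h ∧ C.2 = Finset.image h Finset.univ ∧
     ∃ v : Fin k → V, Function.Injective v ∧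
       (∀ i j : Fin k, ((i : ℕ) + 1) % k = (j : ℕ) → (h i).1 ∩ (h j).1 = {v i}) ∧
       (∀ i j : Fin k, i ≠ j → ((i : ℕ) + 1) % k ≠ (j : ℕ) → ((j : ℕ) + 1) % k ≠ (i : ℕ) →
         (h i).1 ∩ (h j).1 = ∅)))

/-- `C` is a clean `F`-cycle (of some length `k ≥ 2`). -/
def IsCleanCycle {r : ℕ} {V : Type*} [DecidableEq V] (F : SimpleGraph (Fin r))
    (C : FGraph V) : Prop :=
  ∃ k, IsCleanCycleOfLen F C k

/-- `C` is a sparse clean `F`-cycle: a clean `F`-cycle of length 2 whose two overlap vertices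
form an edge of both of its `F`-edges. -/
def IsSparse {r : ℕ} {V : Type*} [DecidableEq V] (F : SimpleGraph (Fin r))
    (C : FGraph V) : Prop :=
  IsCleanCycleOfLen F C 2 ∧ ∃ h₁ h₂ : FEdge V, h₁ ≠ h₂ ∧ C.2 = {h₁, h₂} ∧
    ∃ x y : V, x ≠ y ∧ h₁.1 ∩ h₂.1 = {x, y} ∧ s(x, y) ∈ h₁.2 ∧ s(x, y) ∈ h₂.2

/-! ### The random `F`-graph `H_F(n,π)` -/

/-- All potential `F`-edges on the vertex set `Fin n`. -/
def allFEdges (r n : ℕ) (F : SimpleGraph (Fin r)) : Finset (FEdge (Fin n)) :=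
  Finset.univ.filter fun h => FEdge.IsCopyOf h F

/-- Expectation of `X` under the random `F`-graph `H_F(n,π)`, whose `F`-edge set is a random
subset of `allFEdges r n F`, each `F`-edge present independently with probability `π`. -/
def hfExp (r n : ℕ) (F : SimpleGraph (Fin r)) (π : ℝ)
    (X : Finset (FEdge (Fin n)) → ℝ) : ℝ :=
  ∑ S ∈ (allFEdges r n F).powerset,
    π ^ S.card * (1 - π) ^ ((allFEdges r n F).card - S.card) * X S

/-- Probability of `P` under the random `F`-graph `H_F(n,π)`. -/
def hfProb (r n : ℕ) (F : SimpleGraph (Fin r)) (π : ℝ)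
    (P : Finset (FEdge (Fin n)) → Prop) : ℝ :=
  hfExp r n F π fun S => if P S then 1 else 0

/-! ### Maps, isomorphisms and copies of `F`-graphs -/

/-- Image of an `F`-edge under a vertex map. -/
def FEdge.map {V W : Type*} [DecidableEq W] (ψ : V → W) (h : FEdge V) : FEdge W :=
  (h.1.image ψ, h.2.image (Sym2.map ψ))

/-- Image of an `F`-graph under a vertex map. -/
def FGraph.map {V W : Type*} [DecidableEq V] [DecidableEq W] (ψ : V → W)
    (H : FGraph V) : FGraph W :=
  (H.1.image ψ, H.2.image (FEdge.map ψ))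

/-- `H` is isomorphic to `K` via a vertex bijection mapping `F`-edges to `F`-edges. -/
def FGraph.IsoTo {V W : Type*} [DecidableEq V] [DecidableEq W] (H : FGraph V)
    (K : FGraph W) : Prop :=
  ∃ ψ : V → W, Set.InjOn ψ ↑H.1 ∧ FGraph.map ψ H = K

/-- The number of copies of the `F`-graph `H` among a set `S` of `F`-edges on `Fin n`. -/
def copyCount {V : Type*} [DecidableEq V] (H : FGraph V) {n : ℕ}
    (S : Finset (FEdge (Fin n))) : ℕ :=
  Nat.card {K : FGraph (Fin n) // K.2 ⊆ S ∧ FGraph.IsoTo H K}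

/-- Union of two `F`-graphs. -/
def FGraph.union {V : Type*} [DecidableEq V] (H K : FGraph V) : FGraph V :=
  (H.1 ∪ K.1, H.2 ∪ K.2)

/-! ### d-graphs and the random d-graph `G*(n,p)` -/

/-- A d-graph: vertices, usual edges, and dummy edges (identified with sparse clean
`F`-cycles). -/
abbrev DGraph (V : Type*) := Finset V × Finset (Sym2 V) × Finset (FGraph V)

/-- All potential usual edges on `Fin n`. -/
def allUsual (n : ℕ) : Finset (Sym2 (Fin n)) := Finset.univ.filter fun e => ¬e.IsDiag

/-- All potential dummy edges on `Fin n`: the sparse clean `F`-cycles. -/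
def allDummies (r n : ℕ) (F : SimpleGraph (Fin r)) : Finset (FGraph (Fin n)) :=
  Finset.univ.filter fun C => IsSparse F C

/-- Expectation of `X` under the random d-graph `G*(n,p)`: each usual edge and each dummy
edge is included independently with probability `p`. -/
def dgExp (r n : ℕ) (F : SimpleGraph (Fin r)) (p : ℝ)
    (X : Finset (Sym2 (Fin n)) → Finset (FGraph (Fin n)) → ℝ) : ℝ :=
  ∑ U ∈ (allUsual n).powerset, ∑ D ∈ (allDummies r n F).powerset,
    p ^ (U.card + D.card) *
      (1 - p) ^ (((allUsual n).card - U.card) + ((allDummies r n F).card - D.card)) * X U D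

/-- Probability of `P` under the random d-graph `G*(n,p)`. -/
def dgProb (r n : ℕ) (F : SimpleGraph (Fin r)) (p : ℝ)
    (P : Finset (Sym2 (Fin n)) → Finset (FGraph (Fin n)) → Prop) : ℝ :=
  dgExp r n F p fun U D => if P U D then 1 else 0

/-- Image of a d-graph under a vertex map. -/
def DGraph.map {V W : Type*} [DecidableEq V] [DecidableEq W] (ψ : V → W)
    (K : DGraph V) : DGraph W :=
  (K.1.image ψ, K.2.1.image (Sym2.map ψ), K.2.2.image (FGraph.map ψ))

/-- `K` is isomorphic to `L` as a d-graph. -/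
def DGraph.IsoTo {V W : Type*} [DecidableEq V] [DecidableEq W] (K : DGraph V)
    (L : DGraph W) : Prop :=
  ∃ ψ : V → W, Set.InjOn ψ ↑K.1 ∧ DGraph.map ψ K = L

/-- The number of copies of the d-graph `K` inside the d-graph on `Fin n` with usual edges
`U` and dummy edges `D`. -/
def dCopyCount {V : Type*} [DecidableEq V] (K : DGraph V) {n : ℕ}
    (U : Finset (Sym2 (Fin n))) (D : Finset (FGraph (Fin n))) : ℕ :=
  Nat.card {L : DGraph (Fin n) // L.2.1 ⊆ U ∧ L.2.2 ⊆ D ∧ DGraph.IsoTo K L}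

/-- Union of two d-graphs. -/
def DGraph.union {V : Type*} [DecidableEq V] (K L : DGraph V) : DGraph V :=
  (K.1 ∪ L.1, K.2.1 ∪ L.2.1, K.2.2 ∪ L.2.2)

/-- `G` is the clean d-cycle corresponding to the clean `F`-cycle `C`: the shadow graph of
`C` if `C` is dense, together with the dummy edge `C` if `C` is sparse. -/
def IsCleanDCycleOf {r : ℕ} {V : Type*} [DecidableEq V] (F : SimpleGraph (Fin r))
    (G : DGraph V) (C : FGraph V) : Prop :=
  (IsCleanCycle F C ∧ ¬IsSparse F C ∧ G = (C.1, shadowEdges C, (∅ : Finset (FGraph V)))) ∨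
  (IsSparse F C ∧ G = (C.1, shadowEdges C, ({C} : Finset (FGraph V))))

/-!
Let `N` be the number of copies of `F` through a given vertex of the complete graph, so that
`N * p* ^ s = log n`. A vertex is isolated when `G(n,p)` contains none of these copies. Harris'
inequality bounds the probability of this from below by `(1 - p ^ s) ^ N`, and Janson's inequality
bounds it from above by `exp (-N * p ^ s + Δ)`, where `Δ` sums `ℙ(both copies present)` over the
pairs of distinct copies sharing an edge. The shared edges of such a pair form a proper subgraph of
`F`, of smaller 1-density as `F` is strictly 1-balanced, and this saves a factor `n ^ (-1 / s)`: for
`p` of order `p*` we get `Δ = O(log² n * n ^ (-1 / s))`. Hence each vertex is isolated with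
probability `exp (-N * p ^ s + o(1))`, and in the same way each pair of vertices with probability at
most `exp (-2 * N * p ^ s + o(1))`.

If `N * p ^ s ≤ c * log n` with `c < 1`, the expected number of isolated vertices tends to infinity
and the second moment method, in the form of the Chung–Erdős inequality, shows that with high
probability there is one. If `N * p ^ s ≥ c * log n` with `c > 1`, lowering `p` until equality holds
only makes isolated vertices more likely, and then a union bound over the vertices excludes them.
-/

open MeasureTheory ProbabilityTheory
open scoped unitInterval Finset SimpleGraph
open unitInterval (toNNReal)

section ChungErdos

variable {Ω ι : Type*} {mΩ : MeasurableSpace Ω}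

theorem sq_integral_le_measureReal_mul_integral_sq (μ : Measure Ω) [IsFiniteMeasure μ] {f : Ω → ℝ}
    {U : Set Ω} (hU : MeasurableSet U) (hfU : Function.support f ⊆ U) (hf : Integrable f μ)
    (hf2 : Integrable (fun ω ↦ f ω ^ 2) μ) :
    (∫ ω, f ω ∂μ) ^ 2 ≤ μ.real U * ∫ ω, f ω ^ 2 ∂μ := by
  have hUint : Integrable (U.indicator (1 : Ω → ℝ)) μ := (integrable_const 1).indicator hU
  have expand (t : ℝ) (ω : Ω) : (t * U.indicator 1 ω - f ω) ^ 2 =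
      t ^ 2 * U.indicator 1 ω - 2 * t * f ω + f ω ^ 2 := by
    by_cases hω : ω ∈ U
    · simp only [Set.indicator_of_mem hω, Pi.one_apply]
      ring
    · simp [Set.indicator_of_notMem hω, Function.notMem_support.1 fun h ↦ hω (hfU h)]
  have quadratic_nonneg (t : ℝ) :
      0 ≤ μ.real U * (t * t) + (-2 * ∫ ω, f ω ∂μ) * t + ∫ ω, f ω ^ 2 ∂μ := by
    have h := integral_nonneg (μ := μ) (f := fun ω ↦ (t * U.indicator 1 ω - f ω) ^ 2)
      fun ω ↦ sq_nonneg _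
    simp only [expand] at h
    rw [integral_add ((hUint.const_mul _).sub' (hf.const_mul _)) hf2,
      integral_sub (hUint.const_mul _) (hf.const_mul _), integral_const_mul, integral_const_mul,
      integral_indicator_one hU] at h
    linarith
  have := discrim_le_zero quadratic_nonneg
  rw [discrim] at this
  linarith

theorem integrable_sum_indicator_one (μ : Measure Ω) [IsFiniteMeasure μ] (s : Finset ι)
    {B : ι → Set Ω} (hB : ∀ i ∈ s, MeasurableSet (B i)) :
    Integrable (fun ω ↦ ∑ i ∈ s, (B i).indicator (1 : Ω → ℝ) ω) μ :=
  integrable_finsetSum _ fun i hi ↦ (integrable_const 1).indicator (hB i hi)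

theorem integral_sum_indicator_one (μ : Measure Ω) [IsFiniteMeasure μ] (s : Finset ι)
    {B : ι → Set Ω} (hB : ∀ i ∈ s, MeasurableSet (B i)) :
    ∫ ω, ∑ i ∈ s, (B i).indicator (1 : Ω → ℝ) ω ∂μ = ∑ i ∈ s, μ.real (B i) := by
  rw [integral_finsetSum _ fun i hi ↦ (integrable_const 1).indicator (hB i hi)]
  exact Finset.sum_congr rfl fun i hi ↦ integral_indicator_one (hB i hi)

theorem sq_sum_measureReal_le (μ : Measure Ω) [IsFiniteMeasure μ] (s : Finset ι) {B : ι → Set Ω}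
    (hB : ∀ i ∈ s, MeasurableSet (B i)) :
    (∑ i ∈ s, μ.real (B i)) ^ 2 ≤
      μ.real (⋃ i ∈ s, B i) * ∑ i ∈ s, ∑ j ∈ s, μ.real (B i ∩ B j) := by
  have hsq (ω : Ω) : (∑ i ∈ s, (B i).indicator (1 : Ω → ℝ) ω) ^ 2 =
      ∑ ij ∈ s ×ˢ s, (B ij.1 ∩ B ij.2).indicator (1 : Ω → ℝ) ω := by
    simp [Set.inter_indicator_one, sq, Finset.sum_mul_sum, Finset.sum_product]
  have hB2 : ∀ ij ∈ s ×ˢ s, MeasurableSet (B ij.1 ∩ B ij.2) := fun ij hij ↦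
    (hB _ (Finset.mem_product.1 hij).1).inter (hB _ (Finset.mem_product.1 hij).2)
  have hsupp : Function.support (fun ω ↦ ∑ i ∈ s, (B i).indicator (1 : Ω → ℝ) ω) ⊆
      ⋃ i ∈ s, B i := fun ω hω ↦ by
    obtain ⟨i, hi, hne⟩ := Finset.exists_ne_zero_of_sum_ne_zero hω
    exact Set.mem_biUnion hi (Set.mem_of_indicator_ne_zero hne)
  have h := sq_integral_le_measureReal_mul_integral_sq μ (s.measurableSet_biUnion hB) hsupp
    (integrable_sum_indicator_one μ s hB)
    (by simpa only [hsq] using integrable_sum_indicator_one μ _ hB2)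
  simp only [hsq] at h
  rwa [integral_sum_indicator_one μ s hB, integral_sum_indicator_one μ _ hB2,
    Finset.sum_product] at h

theorem one_div_le_measureReal_biUnion (μ : Measure Ω) [IsProbabilityMeasure μ] {s : Finset ι}
    {B : ι → Set Ω} (hB : ∀ i ∈ s, MeasurableSet (B i)) (hs : s.Nonempty) {a b : ℝ} (ha : 0 < a)
    (hb : 0 ≤ b) (hsingle : ∀ i ∈ s, a ≤ μ.real (B i))
    (hpair : ∀ i ∈ s, ∀ j ∈ s, i ≠ j → μ.real (B i ∩ B j) ≤ b) :
    1 / (1 / (s.card * a) + b / a ^ 2) ≤ μ.real (⋃ i ∈ s, B i) := by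
  set m := ∑ i ∈ s, μ.real (B i)
  have hm : s.card * a ≤ m := by
    simpa using Finset.sum_le_sum hsingle
  have hcard : (0 : ℝ) < s.card := by exact_mod_cast hs.card_pos
  have hm_pos : 0 < m := (mul_pos hcard ha).trans_le hm
  have pairs_le : ∑ i ∈ s, ∑ j ∈ s, μ.real (B i ∩ B j) ≤ m + s.card ^ 2 * b := by
    calc ∑ i ∈ s, ∑ j ∈ s, μ.real (B i ∩ B j)
        ≤ ∑ i ∈ s, ∑ j ∈ s, ((if i = j then μ.real (B i) else 0) + b) := by
          gcongr with i hi j hj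
          split_ifs with hij
          · simpa [hij] using hb
          · simpa using hpair i hi j hj hij
      _ = m + s.card ^ 2 * b := by
          simp [Finset.sum_add_distrib, m]
          ring
  have card_sq_le : s.card ^ 2 * b ≤ m ^ 2 * (b / a ^ 2) := by
    calc (s.card : ℝ) ^ 2 * b = (s.card * a) ^ 2 * (b / a ^ 2) := by field_simp
      _ ≤ m ^ 2 * (b / a ^ 2) := by gcongr
  have key : 1 ≤ μ.real (⋃ i ∈ s, B i) * (1 / m + b / a ^ 2) := by
    have h : m ^ 2 ≤ μ.real (⋃ i ∈ s, B i) * (m + m ^ 2 * (b / a ^ 2)) :=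
      (sq_sum_measureReal_le μ s hB).trans (by gcongr; linarith)
    have hm_sq : 0 < m ^ 2 := by positivity
    refine le_of_mul_le_mul_left ?_ hm_sq
    calc m ^ 2 * 1 ≤ μ.real (⋃ i ∈ s, B i) * (m + m ^ 2 * (b / a ^ 2)) := by simpa using h
      _ = m ^ 2 * (μ.real (⋃ i ∈ s, B i) * (1 / m + b / a ^ 2)) := by field_simp
  rw [div_le_iff₀ (by positivity)]
  exact key.trans (by gcongr)

end ChungErdos

section Harris

variable {L : Type*} [DistribLattice L] [MeasurableSpace L]

/-- The FKG lattice condition: log-supermodularity of the point masses of `μ`. On a finite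
distributive lattice it makes increasing events positively correlated. -/
def FKGLatticeCondition (μ : Measure L) : Prop :=
  ∀ a b, μ.real {a} * μ.real {b} ≤ μ.real {a ⊓ b} * μ.real {a ⊔ b}

variable [Finite L] [MeasurableSingletonClass L] {μ : Measure L} [IsProbabilityMeasure μ]
  {U V D E : Set L}

theorem measureReal_mul_le_inter_of_isUpperSet (hμ : FKGLatticeCondition μ) (hU : IsUpperSet U)
    (hV : IsUpperSet V) : μ.real U * μ.real V ≤ μ.real (U ∩ V) := by
  have := Fintype.ofFinite L
  have sum_indicator (A : Set L) : ∑ a, μ.real {a} * A.indicator 1 a = μ.real A := by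
    rw [← A.coe_toFinset, ← sum_measureReal_singleton, ← Finset.sum_subset (Finset.subset_univ _)]
    · exact Finset.sum_congr rfl fun a ha ↦ by simp_all
    · intro a _ ha
      simp_all
  have indicator_mono {A : Set L} (hA : IsUpperSet A) : Monotone (A.indicator (1 : L → ℝ)) := by
    intro a b hab
    by_cases ha : a ∈ A
    · simp [ha, hA hab ha]
    · simpa [ha] using Set.indicator_nonneg (by simp) _
  have h := fkg (U.indicator 1) (V.indicator 1) (fun a ↦ μ.real {a}) (fun _ ↦ measureReal_nonneg)
    (Set.indicator_nonneg fun _ _ ↦ zero_le_one) (Set.indicator_nonneg fun _ _ ↦ zero_le_one)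
    (indicator_mono hU) (indicator_mono hV) hμ
  have inter : ∑ a, μ.real {a} * (U.indicator 1 a * V.indicator 1 a) = μ.real (U ∩ V) := by
    rw [← sum_indicator, Set.inter_indicator_one]
    rfl
  rw [sum_indicator, sum_indicator, inter] at h
  simpa using h

theorem measureReal_inter_le_mul_of_isUpperSet_isLowerSet (hμ : FKGLatticeCondition μ)
    (hU : IsUpperSet U) (hD : IsLowerSet D) : μ.real (U ∩ D) ≤ μ.real U * μ.real D := by
  have h := measureReal_mul_le_inter_of_isUpperSet hμ hU hD.compl
  rw [probReal_compl_eq_one_sub D.toFinite.measurableSet, ← Set.sdiff_eq] at h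
  have := measureReal_inter_add_sdiff (μ := μ) (s := U) D.toFinite.measurableSet
  linarith

theorem measureReal_mul_le_inter_of_isLowerSet (hμ : FKGLatticeCondition μ) (hD : IsLowerSet D)
    (hE : IsLowerSet E) : μ.real D * μ.real E ≤ μ.real (D ∩ E) := by
  have h := measureReal_inter_le_mul_of_isUpperSet_isLowerSet hμ hD.compl hE
  rw [probReal_compl_eq_one_sub D.toFinite.measurableSet, Set.inter_comm, ← Set.sdiff_eq] at h
  have := measureReal_inter_add_sdiff (μ := μ) (s := E) D.toFinite.measurableSet
  rw [Set.inter_comm D]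
  linarith

end Harris

section SetBernoulli

variable {α : Type*} {u : Set α} {p q : I}

theorem measurable_and_le (c : Prop) (p : I) : Measurable fun x : I ↦ c ∧ x ≤ p :=
  measurable_to_prop (by measurability)

theorem measurable_setOf_le (u : Set α) (p : I) :
    Measurable fun x : α → I ↦ {e ∈ u | x e ≤ p} :=
  measurable_set_iff.2 fun e ↦ (measurable_and_le (e ∈ u) p).comp (measurable_pi_apply e)

theorem map_and_le_volume (c : Prop) (p : I) :
    (volume : Measure I).map (fun x ↦ c ∧ x ≤ p) =
      toNNReal p • Measure.dirac c + toNNReal (σ p) • Measure.dirac False := by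
  have hIic : volume {x | x ≤ p} = toNNReal p :=
    (unitInterval.volume_Iic p).trans (ENNReal.ofReal_eq_coe_nnreal p.2.1)
  have hIoi : volume {x | p < x} = toNNReal (σ p) :=
    (unitInterval.volume_Ioi p).trans (ENNReal.ofReal_eq_coe_nnreal (σ p).2.1)
  have hsum : (toNNReal p : ENNReal) + toNNReal (σ p) = 1 := by
    rw [← ENNReal.coe_add, unitInterval.toNNReal_add_toNNReal_symm, ENNReal.coe_one]
  refine Measure.ext_of_singleton fun P ↦ ?_
  rw [Measure.map_apply (measurable_and_le c p) .of_discrete]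
  by_cases hP : P <;> by_cases hc : c <;> simp [hc, hP, Set.preimage, hIic, hIoi, hsum]

theorem map_setOf_le_eq_setBernoulli (u : Set α) (p : I) :
    (Measure.infinitePi fun _ : α ↦ (volume : Measure I)).map (fun x ↦ {e ∈ u | x e ≤ p}) =
      setBer(u, p) := by
  have hm : Measurable fun (x : α → I) e ↦ e ∈ u ∧ x e ≤ p :=
    measurable_pi_lambda _ fun e ↦ (measurable_and_le (e ∈ u) p).comp (measurable_pi_apply e)
  rw [setBernoulli_eq_map]
  simp_rw [← map_and_le_volume]
  rw [← Measure.infinitePi_map_pi _ fun e ↦ measurable_and_le (e ∈ u) p,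
    Measure.map_map (by fun_prop) hm]
  rfl

theorem setBernoulli_real_anti_of_isLowerSet (hpq : p ≤ q) {ℬ : Set (Set α)} (hℬ : IsLowerSet ℬ)
    (hm : MeasurableSet ℬ) : setBer(u, q).real ℬ ≤ setBer(u, p).real ℬ := by
  rw [← map_setOf_le_eq_setBernoulli, ← map_setOf_le_eq_setBernoulli,
    map_measureReal_apply (measurable_setOf_le u q) hm,
    map_measureReal_apply (measurable_setOf_le u p) hm]
  exact measureReal_mono fun x ↦ hℬ fun e he ↦ ⟨he.1, he.2.trans hpq⟩

theorem iIndepFun_mem_setBernoulli (u : Set α) (p : I) :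
    iIndepFun (fun e (A : Set α) ↦ e ∈ A) setBer(u, p) := by
  have hm := measurable_setOf_le u p
  have h := iIndepFun_infinitePi (P := fun _ : α ↦ (volume : Measure I))
    fun e ↦ measurable_and_le (e ∈ u) p
  rw [iIndepFun_iff_map_fun_eq_infinitePi_map (by fun_prop), ← map_setOf_le_eq_setBernoulli,
    Measure.map_map (by fun_prop) hm]
  simp_rw [Measure.map_map (measurable_set_mem _) hm]
  exact h.map_fun_eq_infinitePi_map
    fun e ↦ (measurable_and_le (e ∈ u) p).comp (measurable_pi_apply e)

theorem setBernoulli_real_setOf_mem (p : I) {e : α} (he : e ∈ u) :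
    setBer(u, p).real {A | e ∈ A} = p := by
  have h := (measurePreserving_eval_infinitePi (fun _ : α ↦ (volume : Measure I)) e)
    |>.measure_preimage (s := Set.Iic p) measurableSet_Iic.nullMeasurableSet
  rw [← map_setOf_le_eq_setBernoulli, map_measureReal_apply (measurable_setOf_le u p)
    (measurableSet_setOfPred.2 (measurable_set_mem e)), measureReal_def]
  simp_all [Set.preimage, p.2.1]

theorem setBernoulli_real_Ici {S : Set α} (p : I) (hSu : S ⊆ u) (hS : S.Finite) :
    setBer(u, p).real (Set.Ici S) = p ^ S.ncard := by
  lift S to Finset α using hS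
  have h := (iIndepFun_mem_setBernoulli u p).meas_biInter (S := S) (s := fun e ↦ {A | e ∈ A})
    fun e _ ↦ ⟨{True}, .of_discrete, by ext; simp⟩
  have hI : Set.Ici (S : Set α) = ⋂ e ∈ S, {A | e ∈ A} := by ext; simp [Set.subset_def]
  rw [hI, measureReal_def, h, ENNReal.toReal_prod, Set.ncard_coe_finset]
  exact Finset.prod_eq_pow_card fun e he ↦ setBernoulli_real_setOf_mem p (hSu he)

variable [Finite α]

theorem setBernoulli_real_Ici_inter (u : Set α) (p : I) {S : Set α} {ℬ : Set (Set α)}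
    (hℬ : ∀ A, A \ S ∈ ℬ ↔ A ∈ ℬ) :
    setBer(u, p).real (Set.Ici S ∩ ℬ) = setBer(u, p).real (Set.Ici S) * setBer(u, p).real ℬ := by
  have := Fintype.ofFinite α
  have indep := (iIndepFun_mem_setBernoulli u p).indepFun_finset S.toFinset S.toFinsetᶜ
    disjoint_compl_right (by fun_prop)
  have hS : Set.Ici S =
      (fun (A : Set α) (e : S.toFinset) ↦ (e : α) ∈ A) ⁻¹' {P | ∀ e, P e} := by
    ext
    simp [Set.subset_def]
  have hℬ' : ℬ = (fun (A : Set α) (e : (S.toFinsetᶜ : Finset α)) ↦ (e : α) ∈ A) ⁻¹'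
      {P | {e | ∃ h : e ∈ S.toFinsetᶜ, P ⟨e, h⟩} ∈ ℬ} := by
    ext A
    rw [← hℬ]
    simp [Set.sdiff_eq, Set.inter_def, and_comm]
  have h := indep.measure_inter_preimage_eq_mul _ _
    (Set.toFinite {P | ∀ e, P e}).measurableSet
    (Set.toFinite {P | {e | ∃ h : e ∈ S.toFinsetᶜ, P ⟨e, h⟩} ∈ ℬ}).measurableSet
  rw [← hS, ← hℬ'] at h
  simp only [measureReal_def, h, ENNReal.toReal_mul]

theorem fkgLatticeCondition_setBernoulli (u : Set α) (p : I) :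
    FKGLatticeCondition setBer(u, p) := by
  intro A B
  by_cases hA : A ⊆ u
  swap; · simp [measureReal_def, hA]
  by_cases hB : B ⊆ u
  swap; · simp [measureReal_def, hB]
  have hu := u.toFinite
  simp only [Set.inf_eq_inter, Set.sup_eq_union]
  rw [setBernoulli_real_singleton p hA hu, setBernoulli_real_singleton p hB hu,
    setBernoulli_real_singleton p (Set.inter_subset_left.trans hA) hu,
    setBernoulli_real_singleton p (Set.union_subset hA hB) hu]
  have h₁ := Set.ncard_inter_add_ncard_union A B
  have h₂ := Set.ncard_union_add_ncard_inter (u \ A) (u \ B)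
  rw [← Set.sdiff_inter, Set.sdiff_inter_sdiff] at h₂
  rw [mul_mul_mul_comm, mul_mul_mul_comm ((p : ℝ) ^ (A ∩ B).ncard),
    ← pow_add, ← pow_add, ← pow_add, ← pow_add, h₁, h₂]

end SetBernoulli

section Avoiding

variable {α : Type*}

/-- The sets containing no member of `𝒮`: the complement of the event whose probability Janson's
inequality bounds. -/
def avoiding (𝒮 : Finset (Set α)) : Set (Set α) := {A | ∀ S ∈ 𝒮, ¬S ⊆ A}

theorem isLowerSet_avoiding (𝒮 : Finset (Set α)) : IsLowerSet (avoiding 𝒮) :=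
  fun _ _ hAB hA S hS hSB ↦ hA S hS (hSB.trans hAB)

theorem avoiding_insert (S : Set α) (𝒮 : Finset (Set α)) :
    avoiding (insert S 𝒮) = (Set.Ici S)ᶜ ∩ avoiding 𝒮 := by
  ext
  simp [avoiding]

theorem avoiding_union (𝒮 𝒯 : Finset (Set α)) :
    avoiding (𝒮 ∪ 𝒯) = avoiding 𝒮 ∩ avoiding 𝒯 := by
  ext A
  simp [avoiding, or_imp, forall_and]

theorem avoiding_subset {𝒮 𝒯 : Finset (Set α)} (h : 𝒯 ⊆ 𝒮) : avoiding 𝒮 ⊆ avoiding 𝒯 :=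
  fun _ hA S hS ↦ hA S (h hS)

variable [Finite α] (u : Set α) (p : I)

theorem prod_one_sub_le_setBernoulli_real_avoiding (𝒮 : Finset (Set α)) :
    ∏ S ∈ 𝒮, (1 - setBer(u, p).real (Set.Ici S)) ≤ setBer(u, p).real (avoiding 𝒮) := by
  induction 𝒮 using Finset.induction_on with
  | empty => simp [avoiding]
  | insert S 𝒮 hS ih =>
    rw [Finset.prod_insert hS, avoiding_insert,
      ← probReal_compl_eq_one_sub (Set.toFinite (Set.Ici S)).measurableSet]
    exact (mul_le_mul_of_nonneg_left ih measureReal_nonneg).trans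
      (measureReal_mul_le_inter_of_isLowerSet (fkgLatticeCondition_setBernoulli u p)
        (isUpperSet_Ici S).compl (isLowerSet_avoiding 𝒮))

theorem setBernoulli_real_Ici_inter_avoiding_of_disjoint {S : Set α} {𝒮 : Finset (Set α)}
    (h : ∀ T ∈ 𝒮, Disjoint S T) :
    setBer(u, p).real (Set.Ici S ∩ avoiding 𝒮) =
      setBer(u, p).real (Set.Ici S) * setBer(u, p).real (avoiding 𝒮) :=
  setBernoulli_real_Ici_inter u p fun A ↦ forall₂_congr fun T hT ↦ by
    simp [Set.subset_sdiff, (h T hT).symm]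

/-- The induction step of Janson's inequality: given `avoiding 𝒮`, the set `S` appears with
probability at least `ℙ(S ⊆ A)` minus a correction for the `T ∈ 𝒮` meeting `S`. The `T` disjoint
from `S` are independent of it, and Harris' inequality controls the others. -/
theorem mul_avoiding_le_setBernoulli_real_Ici_inter_avoiding (S : Set α) (𝒮 : Finset (Set α)) :
    (setBer(u, p).real (Set.Ici S) -
        ∑ T ∈ 𝒮 with ¬Disjoint S T, setBer(u, p).real (Set.Ici (S ∪ T))) *
      setBer(u, p).real (avoiding 𝒮) ≤ setBer(u, p).real (Set.Ici S ∩ avoiding 𝒮) := by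
  set μ := setBer(u, p)
  set 𝒥 := 𝒮.filter (Disjoint S ·)
  set 𝒦 := 𝒮.filter (¬Disjoint S ·)
  have cover : Set.Ici S ∩ avoiding 𝒥 ⊆
      (Set.Ici S ∩ avoiding 𝒮) ∪ ⋃ T ∈ 𝒦, Set.Ici (S ∪ T) ∩ avoiding 𝒥 := by
    rintro A ⟨hS, hA⟩
    by_cases h : A ∈ avoiding 𝒮
    · exact .inl ⟨hS, h⟩
    · simp only [avoiding, Set.mem_ofPred_eq, not_forall, not_not] at h
      obtain ⟨T, hT, hTA⟩ := h
      have hST : ¬Disjoint S T := fun hd ↦ hA T (Finset.mem_filter.2 ⟨hT, hd⟩) hTA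
      exact .inr (Set.mem_biUnion (Finset.mem_filter.2 ⟨hT, hST⟩) ⟨Set.union_subset hS hTA, hA⟩)
  have negative_correlation (T : Set α) : μ.real (Set.Ici T ∩ avoiding 𝒥) ≤
      μ.real (Set.Ici T) * μ.real (avoiding 𝒥) :=
    measureReal_inter_le_mul_of_isUpperSet_isLowerSet (fkgLatticeCondition_setBernoulli u p)
      (isUpperSet_Ici T) (isLowerSet_avoiding 𝒥)
  have key : (μ.real (Set.Ici S) - ∑ T ∈ 𝒦, μ.real (Set.Ici (S ∪ T))) * μ.real (avoiding 𝒥) ≤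
      μ.real (Set.Ici S ∩ avoiding 𝒮) := by
    rw [sub_mul, sub_le_iff_le_add, Finset.sum_mul]
    calc μ.real (Set.Ici S) * μ.real (avoiding 𝒥) = μ.real (Set.Ici S ∩ avoiding 𝒥) :=
          (setBernoulli_real_Ici_inter_avoiding_of_disjoint u p
            fun T hT ↦ (Finset.mem_filter.1 hT).2).symm
      _ ≤ μ.real (Set.Ici S ∩ avoiding 𝒮) +
            μ.real (⋃ T ∈ 𝒦, Set.Ici (S ∪ T) ∩ avoiding 𝒥) :=
          (measureReal_mono cover).trans (measureReal_union_le _ _)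
      _ ≤ _ := by
          gcongr
          exact (measureReal_biUnion_finset_le _ _).trans
            (Finset.sum_le_sum fun T _ ↦ negative_correlation (S ∪ T))
  rcases le_total 0 (μ.real (Set.Ici S) - ∑ T ∈ 𝒦, μ.real (Set.Ici (S ∪ T))) with h | h
  · exact (mul_le_mul_of_nonneg_left
      (measureReal_mono (avoiding_subset (Finset.filter_subset _ _))) h).trans key
  · exact (mul_nonpos_of_nonpos_of_nonneg h measureReal_nonneg).trans measureReal_nonneg

theorem setBernoulli_real_avoiding_insert_le (S : Set α) (𝒮 : Finset (Set α)) :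
    setBer(u, p).real (avoiding (insert S 𝒮)) ≤ setBer(u, p).real (avoiding 𝒮) *
      Real.exp (-setBer(u, p).real (Set.Ici S) +
        ∑ T ∈ 𝒮 with ¬Disjoint S T, setBer(u, p).real (Set.Ici (S ∪ T))) := by
  set μ := setBer(u, p)
  have split : μ.real (avoiding (insert S 𝒮)) =
      μ.real (avoiding 𝒮) - μ.real (Set.Ici S ∩ avoiding 𝒮) := by
    have := measureReal_inter_add_sdiff (μ := μ) (s := avoiding 𝒮)
      (Set.toFinite (Set.Ici S)).measurableSet
    rw [avoiding_insert, Set.inter_comm, ← Set.sdiff_eq, Set.inter_comm (Set.Ici S)]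
    linarith
  have hexp := mul_le_mul_of_nonneg_left (Real.add_one_le_exp (-μ.real (Set.Ici S) +
    ∑ T ∈ 𝒮 with ¬Disjoint S T, μ.real (Set.Ici (S ∪ T))))
    (measureReal_nonneg (μ := μ) (s := avoiding 𝒮))
  have := mul_avoiding_le_setBernoulli_real_Ici_inter_avoiding u p S 𝒮
  linarith

/-- Janson's inequality, with `Δ` summing over ordered pairs. -/
theorem setBernoulli_real_avoiding_le_exp (𝒮 : Finset (Set α)) :
    setBer(u, p).real (avoiding 𝒮) ≤ Real.exp (-∑ S ∈ 𝒮, setBer(u, p).real (Set.Ici S) +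
      ∑ S ∈ 𝒮, ∑ T ∈ 𝒮 with S ≠ T ∧ ¬Disjoint S T, setBer(u, p).real (Set.Ici (S ∪ T))) := by
  set μ := setBer(u, p)
  induction 𝒮 using Finset.induction_on with
  | empty => simp [avoiding]
  | insert S 𝒮 hS ih =>
    refine (setBernoulli_real_avoiding_insert_le u p S 𝒮).trans <|
      (mul_le_mul_of_nonneg_right ih (Real.exp_nonneg _)).trans ?_
    rw [← Real.exp_add, Real.exp_le_exp, Finset.sum_insert hS, Finset.sum_insert hS]
    have new_pairs : ∑ T ∈ 𝒮 with ¬Disjoint S T, μ.real (Set.Ici (S ∪ T)) ≤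
        ∑ T ∈ insert S 𝒮 with S ≠ T ∧ ¬Disjoint S T, μ.real (Set.Ici (S ∪ T)) := by
      refine Finset.sum_le_sum_of_subset_of_nonneg (fun T hT ↦ ?_) fun _ _ _ ↦ measureReal_nonneg
      obtain ⟨hT, hST⟩ := Finset.mem_filter.1 hT
      exact Finset.mem_filter.2 ⟨Finset.mem_insert_of_mem hT, fun h ↦ hS (h ▸ hT), hST⟩
    have old_pairs : ∑ R ∈ 𝒮, ∑ T ∈ 𝒮 with R ≠ T ∧ ¬Disjoint R T, μ.real (Set.Ici (R ∪ T)) ≤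
        ∑ R ∈ 𝒮, ∑ T ∈ insert S 𝒮 with R ≠ T ∧ ¬Disjoint R T, μ.real (Set.Ici (R ∪ T)) := by
      gcongr
      exact Finset.subset_insert S 𝒮
    linarith

end Avoiding

section Copies

variable {V W : Type*} {F : SimpleGraph V}

theorem range_eq_of_map_eq (hF : F.support = Set.univ) {φ ψ : V ↪ W} (h : F.map φ = F.map ψ) :
    Set.range φ = Set.range ψ := by
  simpa [SimpleGraph.support_map, hF] using congrArg SimpleGraph.support h

theorem map_iso_trans (τ : F ≃g F) (φ : V ↪ W) :
    F.map (τ.toEquiv.toEmbedding.trans φ) = F.map φ := by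
  ext a b
  simp only [SimpleGraph.map_adj, Function.Embedding.trans_apply]
  constructor
  · rintro ⟨u, v, huv, rfl, rfl⟩
    exact ⟨τ u, τ v, τ.map_adj_iff.2 huv, rfl, rfl⟩
  · rintro ⟨u, v, huv, rfl, rfl⟩
    exact ⟨τ.symm u, τ.symm v, τ.symm.map_adj_iff.2 huv, by simp, by simp⟩

theorem exists_iso_of_map_eq (hF : F.support = Set.univ) {φ ψ : V ↪ W}
    (h : F.map ψ = F.map φ) : ∃ τ : F ≃g F, τ.toEquiv.toEmbedding.trans φ = ψ := by
  let τ : V ≃ V := (Equiv.ofInjective ψ ψ.injective).trans <|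
    (Equiv.setCongr (range_eq_of_map_eq hF h)).trans (Equiv.ofInjective φ φ.injective).symm
  have hτ (v : V) : φ (τ v) = ψ v := Equiv.apply_ofInjective_symm φ.injective _
  refine ⟨⟨τ, @fun u v ↦ ?_⟩, by ext v; exact hτ v⟩
  rw [← SimpleGraph.map_adj_apply (f := φ), hτ, hτ, ← h, SimpleGraph.map_adj_apply]

theorem card_embedding_map_eq (hF : F.support = Set.univ) (φ : V ↪ W) :
    Nat.card {ψ : V ↪ W // F.map ψ = F.map φ} = Nat.card (F ≃g F) := by
  refine (Nat.card_congr (Equiv.ofBijective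
    (fun τ ↦ ⟨τ.toEquiv.toEmbedding.trans φ, map_iso_trans τ φ⟩) ⟨fun τ τ₁ h ↦ ?_, ?_⟩)).symm
  · ext v
    exact φ.injective (DFunLike.congr_fun (congrArg Subtype.val h) v)
  · rintro ⟨ψ, hψ⟩
    obtain ⟨τ, hτ⟩ := exists_iso_of_map_eq hF hψ
    exact ⟨τ, Subtype.ext hτ⟩

theorem ncard_edgeSet_map (F : SimpleGraph V) (φ : V ↪ W) :
    (F.map φ).edgeSet.ncard = F.edgeSet.ncard := by
  rw [SimpleGraph.edgeSet_map, Set.ncard_image_of_injective _ φ.sym2Map.injective]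

variable [Fintype V] [Fintype W]

theorem card_embedding_notMem_range (x : W) :
    #{φ : V ↪ W | x ∉ Set.range φ} = (Fintype.card W - 1).descFactorial (Fintype.card V) := by
  let e : {φ : V ↪ W // x ∉ Set.range φ} ≃ (V ↪ {y // y ≠ x}) :=
    { toFun := fun φ ↦ φ.1.codRestrict {y | y ≠ x} fun i h ↦ φ.2 ⟨i, h⟩
      invFun := fun ψ ↦ ⟨ψ.trans (.subtype _), fun ⟨i, hi⟩ ↦ (ψ i).2 hi⟩
      left_inv := fun φ ↦ rfl
      right_inv := fun ψ ↦ rfl }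
  rw [← Fintype.card_subtype, Fintype.card_congr e, Fintype.card_embedding_eq]
  simp

theorem card_embedding_mem_range [Nonempty V] (x : W) :
    #{φ : V ↪ W | x ∈ Set.range φ} =
      (Fintype.card V).factorial * (Fintype.card W - 1).choose (Fintype.card V - 1) := by
  have htotal := Finset.card_filter_add_card_filter_not (s := (Finset.univ : Finset (V ↪ W)))
    (x ∈ Set.range ·)
  rw [card_embedding_notMem_range, Finset.card_univ, Fintype.card_embedding_eq] at htotal
  obtain ⟨k, hk⟩ := Nat.exists_eq_succ_of_ne_zero (Fintype.card_ne_zero (α := V))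
  obtain ⟨m, hm⟩ := Nat.exists_eq_succ_of_ne_zero (Fintype.card_pos_iff.2 ⟨x⟩).ne'
  simp only [hk, hm, Nat.descFactorial_eq_factorial_mul_choose, Nat.succ_eq_add_one,
    Nat.choose_succ_succ, Nat.add_sub_cancel, mul_add] at htotal ⊢
  omega

theorem card_eqOn_le (s : Finset V) (g : V → W) :
    #{f : V → W | Set.EqOn f g s} ≤ Fintype.card W ^ (Fintype.card V - #s) := by
  refine (Finset.card_le_card_of_injOn (t := Finset.univ) (fun f (v : ↥sᶜ) ↦ f v) (by simp)
    fun f hf f' hf' h ↦ funext fun v ↦ ?_).trans_eq (by simp)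
  by_cases hv : v ∈ s
  · simp only [Finset.coe_filter, Finset.mem_univ, true_and, Set.mem_ofPred_eq] at hf hf'
    rw [hf hv, hf' hv]
  · exact congrFun h ⟨v, Finset.mem_compl.2 hv⟩

theorem card_embedding_mem_range_and_mem_range_le {x y : W} (hxy : x ≠ y) :
    #{φ : V ↪ W | x ∈ Set.range φ ∧ y ∈ Set.range φ} ≤
      Fintype.card V ^ 2 * Fintype.card W ^ (Fintype.card V - 2) := by
  let E (ij : V × V) : Finset (V → W) :=
    {f | Set.EqOn f (fun v ↦ if v = ij.1 then x else y) ({ij.1, ij.2} : Finset V)}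
  have hE : ∀ ij ∈ (Finset.univ : Finset V).offDiag,
      #(E ij) ≤ Fintype.card W ^ (Fintype.card V - 2) := fun ij hij ↦ by
    simpa [E, Finset.card_pair (Finset.mem_offDiag.1 hij).2.2] using
      card_eqOn_le {ij.1, ij.2} fun v ↦ if v = ij.1 then x else y
  have hmaps : Set.MapsTo (fun φ : V ↪ W ↦ (φ : V → W))
      ({φ : V ↪ W | x ∈ Set.range φ ∧ y ∈ Set.range φ} : Finset (V ↪ W))
      ((Finset.univ : Finset V).offDiag.biUnion E) := by
    intro φ hφ
    obtain ⟨⟨i, rfl⟩, j, rfl⟩ := (Finset.mem_filter.1 hφ).2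
    have hij : i ≠ j := fun h ↦ hxy (congrArg φ h)
    simp only [Finset.coe_biUnion, Set.mem_iUnion]
    exact ⟨(i, j), by simpa using hij, by simp [E, Set.EqOn, hij.symm]⟩
  calc #{φ : V ↪ W | x ∈ Set.range φ ∧ y ∈ Set.range φ}
      ≤ #((Finset.univ : Finset V).offDiag.biUnion E) :=
        Finset.card_le_card_of_injOn _ hmaps DFunLike.coe_injective.injOn
    _ ≤ #(Finset.univ : Finset V).offDiag * Fintype.card W ^ (Fintype.card V - 2) :=
        Finset.card_biUnion_le_card_mul _ _ _ hE
    _ ≤ Fintype.card V ^ 2 * Fintype.card W ^ (Fintype.card V - 2) := by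
        gcongr
        simp [Finset.offDiag_card, sq]

end Copies

section CopyEdgeSets

variable {V W : Type*} [Fintype V] [Fintype W] {F : SimpleGraph V} {X Y : Set W}

/-- The edge sets of the copies of `F` in the complete graph on `W` that meet `X`. Embeddings
differing by an automorphism of `F` give the same copy. -/
def copyEdgeSets (F : SimpleGraph V) (X : Set W) : Finset (Set (Sym2 W)) :=
  ({φ : V ↪ W | ¬Disjoint (Set.range φ) X} : Finset _).image
    fun φ : V ↪ W ↦ (F.map φ).edgeSet

theorem mem_copyEdgeSets {S : Set (Sym2 W)} :
    S ∈ copyEdgeSets F X ↔ ∃ φ : V ↪ W, ¬Disjoint (Set.range φ) X ∧ (F.map φ).edgeSet = S := by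
  simp [copyEdgeSets]

theorem subset_compl_diagSet_of_mem_copyEdgeSets {S : Set (Sym2 W)} (hS : S ∈ copyEdgeSets F X) :
    S ⊆ Sym2.diagSetᶜ := by
  obtain ⟨φ, -, rfl⟩ := mem_copyEdgeSets.1 hS
  exact (F.map φ).edgeSet_subset_compl_diagSet

theorem ncard_of_mem_copyEdgeSets {S : Set (Sym2 W)} (hS : S ∈ copyEdgeSets F X) :
    S.ncard = F.edgeSet.ncard := by
  obtain ⟨φ, -, rfl⟩ := mem_copyEdgeSets.1 hS
  exact ncard_edgeSet_map F φ

theorem copyEdgeSets_union : copyEdgeSets F (X ∪ Y) = copyEdgeSets F X ∪ copyEdgeSets F Y := by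
  ext S
  simp only [Finset.mem_union, mem_copyEdgeSets, Set.disjoint_union_right, not_and_or, or_and_right,
    exists_or]

theorem card_copyEdgeSets_singleton_mul [Nonempty V] (hF : F.support = Set.univ) (x : W) :
    #(copyEdgeSets F {x}) * Nat.card (F ≃g F) =
      (Fintype.card V).factorial * (Fintype.card W - 1).choose (Fintype.card V - 1) := by
  rw [← card_embedding_mem_range x]
  simp only [copyEdgeSets, Set.disjoint_singleton_right, not_not]
  rw [Finset.card_eq_sum_card_image fun φ : V ↪ W ↦ (F.map φ).edgeSet]
  refine (Finset.sum_const_nat fun S hS ↦ ?_).symm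
  obtain ⟨φ, hφ, rfl⟩ := Finset.mem_image.1 hS
  rw [← card_embedding_map_eq hF φ, Nat.card_eq_fintype_card, Fintype.card_subtype]
  congr 1
  ext ψ
  simp only [Finset.mem_filter, Finset.mem_univ, true_and, SimpleGraph.edgeSet_inj] at hφ ⊢
  exact ⟨fun h ↦ h.2, fun h ↦ ⟨by rwa [range_eq_of_map_eq hF h], h⟩⟩

theorem card_copyEdgeSets_singleton_add_le (hF : F.support = Set.univ) {x y : W} (hxy : x ≠ y) :
    #(copyEdgeSets F {x}) + #(copyEdgeSets F {y}) ≤ #(copyEdgeSets F {x, y}) +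
      Fintype.card V ^ 2 * Fintype.card W ^ (Fintype.card V - 2) := by
  rw [Set.insert_eq, copyEdgeSets_union, ← Finset.card_union_add_card_inter]
  gcongr
  refine (Finset.card_le_card fun S hS ↦ ?_).trans ((Finset.card_image_le
    (f := fun φ : V ↪ W ↦ (F.map φ).edgeSet)).trans (card_embedding_mem_range_and_mem_range_le hxy))
  simp only [Finset.mem_inter, mem_copyEdgeSets, Set.disjoint_singleton_right, not_not] at hS
  obtain ⟨⟨φ, hx, rfl⟩, ψ, hy, hψ⟩ := hS
  refine Finset.mem_image.2 ⟨φ, ?_, rfl⟩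
  rw [range_eq_of_map_eq hF (SimpleGraph.edgeSet_inj.1 hψ)] at hy
  simpa using ⟨hx, hy⟩

theorem card_embedding_not_disjoint_le [Nonempty V] (X : Finset W) :
    #{φ : V ↪ W | ¬Disjoint (Set.range φ) X} ≤
      #X * ((Fintype.card V).factorial * Fintype.card W ^ (Fintype.card V - 1)) := by
  have hcover : ({φ : V ↪ W | ¬Disjoint (Set.range φ) X} : Finset (V ↪ W)) ⊆
      X.biUnion fun x ↦ {φ | x ∈ Set.range φ} := fun φ hφ ↦ by
    obtain ⟨x, hx, hxX⟩ := Set.not_disjoint_iff.1 (Finset.mem_filter.1 hφ).2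
    exact Finset.mem_biUnion.2 ⟨x, hxX, by simpa using hx⟩
  refine (Finset.card_le_card hcover).trans (Finset.card_biUnion_le_card_mul _ _ _ fun x _ ↦ ?_)
  rw [card_embedding_mem_range]
  gcongr
  exact (Nat.choose_le_pow _ _).trans (Nat.pow_le_pow_left (Nat.sub_le _ _) _)

end CopyEdgeSets

section RandomGraph

variable {r n : ℕ} {F : SimpleGraph (Fin r)}

theorem gnpProb_eq_setBernoulli_real (p : I) (P : SimpleGraph (Fin n) → Prop) :
    gnpProb n p P = setBer(Sym2.diagSetᶜ, p).real {A | P (.fromEdgeSet A)} := by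
  have hset : {G : SimpleGraph (Fin n) | P G} = ({G | P G} : Finset (SimpleGraph (Fin n))) := by
    simp
  have : MeasurableSingletonClass (SimpleGraph (Fin n)) := ⟨fun G ↦ by
    rw [← Set.preimage_image_eq {G} SimpleGraph.edgeSet_injective]
    exact SimpleGraph.measurable_edgeSet (Set.toFinite _).measurableSet⟩
  calc gnpProb n p P = G(Fin n, p).real {G | P G} := by
        rw [hset, ← sum_measureReal_singleton, Finset.sum_filter]
        simp [gnpProb, edgeCnt, measureReal_def]
    _ = setBer(Sym2.diagSetᶜ, p).real {A | P (.fromEdgeSet A)} := by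
        rw [SimpleGraph.binomialRandom_eq_map,
          map_measureReal_apply SimpleGraph.measurable_fromEdgeSet (Set.toFinite _).measurableSet]
        rfl

theorem isCopyIn_fromEdgeSet_iff {φ : Fin r ↪ Fin n} {A : Set (Sym2 (Fin n))} :
    IsCopyIn F (.fromEdgeSet A) φ ↔ (F.map φ).edgeSet ⊆ A := by
  rw [← SimpleGraph.le_fromEdgeSet_iff, SimpleGraph.map_le_iff_le_comap]
  rfl

theorem fIsolated_fromEdgeSet_iff {x : Fin n} {A : Set (Sym2 (Fin n))} :
    FIsolated F (.fromEdgeSet A) x ↔ A ∈ avoiding (copyEdgeSets F {x}) := by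
  simp only [FIsolated, isCopyIn_fromEdgeSet_iff, avoiding, mem_copyEdgeSets, Set.mem_ofPred_eq,
    Set.disjoint_singleton_right, not_not]
  exact ⟨fun h S ⟨φ, hx, hS⟩ hSA ↦ h φ (hS ▸ hSA) hx, fun h φ hφ hx ↦ h _ ⟨φ, hx, rfl⟩ hφ⟩

theorem gnpProb_exists_fIsolated (p : I) :
    gnpProb n p (fun G : SimpleGraph (Fin n) ↦ ∃ x, FIsolated F G x) =
      setBer(Sym2.diagSetᶜ, p).real (⋃ x : Fin n, avoiding (copyEdgeSets F {x})) := by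
  rw [gnpProb_eq_setBernoulli_real]
  congr 1
  ext A
  simp [fIsolated_fromEdgeSet_iff]

theorem gnpProb_forall_not_fIsolated (p : I) :
    gnpProb n p (fun G : SimpleGraph (Fin n) ↦ ∀ x, ¬FIsolated F G x) =
      1 - setBer(Sym2.diagSetᶜ, p).real (⋃ x : Fin n, avoiding (copyEdgeSets F {x})) := by
  rw [gnpProb_eq_setBernoulli_real, ← probReal_compl_eq_one_sub (Set.toFinite _).measurableSet]
  congr 1
  ext A
  simp [fIsolated_fromEdgeSet_iff]

theorem setBernoulli_real_Ici_of_mem_copyEdgeSets {V W : Type*} [Fintype V] [Fintype W]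
    {F : SimpleGraph V} {X : Set W} {S : Set (Sym2 W)} (p : I) (hS : S ∈ copyEdgeSets F X) :
    setBer(Sym2.diagSetᶜ, p).real (Set.Ici S) = p ^ F.edgeSet.ncard := by
  rw [setBernoulli_real_Ici p (subset_compl_diagSet_of_mem_copyEdgeSets hS) (Set.toFinite S),
    ncard_of_mem_copyEdgeSets hS]

end RandomGraph

section Overlap

theorem Strictly1Balanced.mul_ncard_edgeSet_lt {r : ℕ} {F : SimpleGraph (Fin r)}
    (hF : Strictly1Balanced F) {S : F.Subgraph} (hS : S ≠ ⊤) (he : S.edgeSet.Nonempty) :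
    (r - 1) * S.edgeSet.ncard < edgeCnt F * (S.verts.ncard - 1) := by
  have hv : 2 ≤ S.verts.ncard := by
    obtain ⟨⟨u, v⟩, huv : S.Adj u v⟩ := he
    rw [← Set.ncard_pair huv.ne]
    exact Set.ncard_le_ncard (Set.pair_subset huv.fst_mem huv.snd_mem)
  have hr : 2 ≤ r := hv.trans ((Set.ncard_le_card _).trans_eq (by simp))
  have h := hF S hS hv ((Set.ncard_pos (Set.toFinite _)).2 he)
  have hr' : (2 : ℝ) ≤ r := mod_cast hr
  have hv' : (2 : ℝ) ≤ S.verts.ncard := mod_cast hv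
  rw [d1, div_lt_div_iff₀ (by linarith) (by linarith), mul_comm] at h
  rw [← Nat.cast_lt (α := ℝ)]
  push_cast [Nat.cast_sub (show 1 ≤ r by lia), Nat.cast_sub (show 1 ≤ S.verts.ncard by lia)]
  exact h

theorem Strictly1Balanced.support_eq_univ {r : ℕ} {F : SimpleGraph (Fin r)}
    (hF : Strictly1Balanced F) (hs : 1 ≤ edgeCnt F) : F.support = Set.univ := by
  refine Set.eq_univ_of_forall fun v ↦ by_contra fun hv ↦ ?_
  let S : F.Subgraph := (⊤ : F.Subgraph).deleteVerts {v}
  have hSe : S.edgeSet = F.edgeSet := by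
    ext ⟨a, b⟩
    have hab : a ≠ v ∧ b ≠ v ∧ F.Adj a b ↔ F.Adj a b :=
      ⟨fun h ↦ h.2.2, fun h ↦ ⟨fun ha ↦ hv ⟨b, ha ▸ h⟩, fun hb ↦ hv ⟨a, hb ▸ h.symm⟩, h⟩⟩
    simpa [S] using hab
  have hSv : S.verts.ncard = r - 1 := by
    simp [S, Set.ncard_sdiff]
  have hne : S ≠ ⊤ := fun h ↦ by simpa [S] using congrArg (v ∈ ·.verts) h
  have := hF.mul_ncard_edgeSet_lt hne (hSe ▸ (Set.ncard_pos (Set.toFinite _)).1 hs)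
  rw [hSe, hSv, mul_comm, ← edgeCnt] at this
  exact (Nat.mul_le_mul_left _ (Nat.sub_le _ _)).not_gt this

variable {V W : Type*} {F : SimpleGraph V}

/-- The part of `F` that the embedding `ψ` maps into the copy `F.map φ`, on the vertices that `ψ`
maps into the range of `φ`. -/
def overlapSubgraph (F : SimpleGraph V) (φ ψ : V ↪ W) : F.Subgraph where
  verts := ψ ⁻¹' Set.range φ
  Adj u v := F.Adj u v ∧ (F.map φ).Adj (ψ u) (ψ v)
  adj_sub h := h.1
  edge_vert := by
    rintro u v ⟨-, h⟩
    obtain ⟨a, -, -, ha, -⟩ := (SimpleGraph.map_adj φ F _ _).1 h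
    exact ⟨a, ha⟩
  symm := ⟨fun _ _ h ↦ ⟨h.1.symm, h.2.symm⟩⟩

theorem image_edgeSet_overlapSubgraph (φ ψ : V ↪ W) :
    Sym2.map ψ '' (overlapSubgraph F φ ψ).edgeSet = (F.map φ).edgeSet ∩ (F.map ψ).edgeSet := by
  ext e
  rw [SimpleGraph.edgeSet_map ψ F]
  constructor
  · rintro ⟨⟨a, b⟩, h, rfl⟩
    exact ⟨h.2, s(a, b), h.1, rfl⟩
  · rintro ⟨h, ⟨a, b⟩, hab, rfl⟩
    exact ⟨s(a, b), ⟨hab, h⟩, rfl⟩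

theorem ncard_edgeSet_overlapSubgraph (φ ψ : V ↪ W) :
    (overlapSubgraph F φ ψ).edgeSet.ncard = ((F.map φ).edgeSet ∩ (F.map ψ).edgeSet).ncard := by
  rw [← image_edgeSet_overlapSubgraph,
    Set.ncard_image_of_injective _ (Sym2.map.injective ψ.injective)]

theorem map_eq_of_overlapSubgraph_eq_top [Finite V] {φ ψ : V ↪ W}
    (h : overlapSubgraph F φ ψ = ⊤) : F.map φ = F.map ψ := by
  have hle : F.map ψ ≤ F.map φ := (SimpleGraph.map_le_iff_le_comap ..).2 fun u v huv ↦
    (show (overlapSubgraph F φ ψ).Adj u v by rwa [h]).2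
  refine (SimpleGraph.edgeSet_inj.1 (Set.eq_of_subset_of_ncard_le
    (SimpleGraph.edgeSet_subset_edgeSet.2 hle) ?_ ?_)).symm
  · rw [ncard_edgeSet_map, ncard_edgeSet_map]
  · rw [SimpleGraph.edgeSet_map φ F]
    exact (Set.toFinite _).image _

end Overlap

section OverlapSum

theorem sum_embedding_pow_ncard_preimage_le {V W : Type*} [Fintype V] [Fintype W] (R : Set W)
    (x : ℕ) : ∑ ψ : V ↪ W, x ^ (ψ ⁻¹' R).ncard ≤
      (R.ncard * x + Fintype.card W) ^ Fintype.card V := by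
  let c (w : W) : ℕ := if w ∈ R then x else 1
  have hc (f : V → W) : x ^ (f ⁻¹' R).ncard = ∏ v, c (f v) := by
    rw [Finset.prod_ite, Finset.prod_const_one, mul_one, Finset.prod_const,
      ← Set.ncard_coe_finset]
    congr
    ext
    simp
  calc ∑ ψ : V ↪ W, x ^ (ψ ⁻¹' R).ncard
      = ∑ f ∈ Finset.univ.map ⟨fun ψ : V ↪ W ↦ (ψ : V → W), DFunLike.coe_injective⟩,
          ∏ v, c (f v) := by simp [hc]
    _ ≤ ∑ f : V → W, ∏ v, c (f v) := Finset.sum_le_sum_of_subset (Finset.subset_univ _)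
    _ = (∑ w, c w) ^ Fintype.card V := by
        rw [← Fintype.piFinset_univ, ← Finset.prod_univ_sum, Finset.prod_const, Finset.card_univ]
    _ ≤ (R.ncard * x + Fintype.card W) ^ Fintype.card V := by
        gcongr
        rw [Finset.sum_ite, Finset.sum_const, Finset.sum_const, smul_eq_mul, smul_eq_mul, mul_one,
          Set.ncard_eq_toFinset_card']
        gcongr
        · intro w
          simp
        · exact Finset.card_le_univ _

theorem pow_mul_pow_le_of_pow_mul_pow_le {p L x : ℝ} (hp : 0 ≤ p) (hL : 1 ≤ L) (hx : 1 ≤ x)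
    {s k a b c : ℕ} (hs : s ≠ 0) (hpx : p ^ s * x ^ k ≤ L) (hab : s * b + 1 ≤ k * a)
    (hac : a ≤ s * c) : p ^ a * x ^ b ≤ L ^ c * x ^ (-(1 / s : ℝ)) := by
  have hx0 : 0 < x := by linarith
  refine le_of_pow_le_pow_left₀ hs (by positivity) ?_
  calc (p ^ a * x ^ b) ^ s = (p ^ s) ^ a * x ^ (s * b + 1) / x := by
        field_simp
        ring
    _ ≤ (p ^ s) ^ a * x ^ (k * a) / x := by gcongr
    _ = (p ^ s * x ^ k) ^ a / x := by rw [mul_pow, ← pow_mul x]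
    _ ≤ L ^ a / x := by gcongr
    _ ≤ L ^ (s * c) / x := by gcongr
    _ = (L ^ c * x ^ (-(1 / s : ℝ))) ^ s := by
        rw [mul_pow, ← pow_mul, ← Real.rpow_mul_natCast hx0.le, neg_mul,
          one_div_mul_cancel (mod_cast hs), Real.rpow_neg_one, mul_comm c, div_eq_mul_inv]

variable {r n : ℕ} {F : SimpleGraph (Fin r)}

theorem Strictly1Balanced.pow_ncard_union_mul_pow_le (hF : Strictly1Balanced F) {p L : ℝ}
    (hp : 0 ≤ p) (hL : 1 ≤ L) (hn : n ≠ 0) (hpn : p ^ edgeCnt F * n ^ (r - 1) ≤ L)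
    {φ ψ : Fin r ↪ Fin n} (hne : (F.map φ).edgeSet ≠ (F.map ψ).edgeSet)
    (hdisj : ¬Disjoint (F.map φ).edgeSet (F.map ψ).edgeSet) :
    p ^ ((F.map φ).edgeSet ∪ (F.map ψ).edgeSet).ncard * n ^ (2 * r - 1) ≤
      L ^ 2 * n ^ (-(1 / edgeCnt F : ℝ)) * n ^ (ψ ⁻¹' Set.range φ).ncard := by
  set S := overlapSubgraph F φ ψ
  have hSr : S.verts.ncard ≤ r := (Set.ncard_le_card _).trans_eq (by simp)
  have hunion : ((F.map φ).edgeSet ∪ (F.map ψ).edgeSet).ncard + S.edgeSet.ncard =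
      2 * edgeCnt F := by
    rw [ncard_edgeSet_overlapSubgraph, Set.ncard_union_add_ncard_inter, ncard_edgeSet_map,
      ncard_edgeSet_map, edgeCnt, two_mul]
  have hSe : S.edgeSet.Nonempty := by
    rw [← Set.image_nonempty, image_edgeSet_overlapSubgraph]
    exact Set.not_disjoint_iff_nonempty_inter.1 hdisj
  have hlt := hF.mul_ncard_edgeSet_lt
    (fun h ↦ hne (congrArg _ (map_eq_of_overlapSubgraph_eq_top h))) hSe
  have hs : edgeCnt F ≠ 0 := fun h ↦ by simp [h] at hlt
  have hv : S.verts.ncard ≠ 0 := fun h ↦ by simp [S, h] at hlt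
  have hexp : edgeCnt F * (2 * r - 1 - S.verts.ncard) + 1 ≤
      (r - 1) * ((F.map φ).edgeSet ∪ (F.map ψ).edgeSet).ncard := by
    have hadd : edgeCnt F * (2 * r - 1 - S.verts.ncard) + edgeCnt F * (S.verts.ncard - 1) =
        (r - 1) * ((F.map φ).edgeSet ∪ (F.map ψ).edgeSet).ncard + (r - 1) * S.edgeSet.ncard := by
      rw [← mul_add, ← mul_add, hunion,
        show 2 * r - 1 - S.verts.ncard + (S.verts.ncard - 1) = 2 * (r - 1) by lia]
      ring
    lia
  have hsplit : 2 * r - 1 = 2 * r - 1 - S.verts.ncard + S.verts.ncard := by lia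
  rw [hsplit, pow_add, ← mul_assoc]
  gcongr ?_ * _
  refine pow_mul_pow_le_of_pow_mul_pow_le hp hL (mod_cast Nat.one_le_iff_ne_zero.2 hn) hs hpn
    hexp ?_
  lia

theorem sum_copyEdgeSets_le_sum {V W : Type*} [Fintype V] [Fintype W] {F : SimpleGraph V}
    {X : Set W} {g : Set (Sym2 W) → ℝ} (hg : ∀ S, 0 ≤ g S) :
    ∑ S ∈ copyEdgeSets F X, g S ≤
      ∑ φ ∈ ({φ | ¬Disjoint (Set.range φ) X} : Finset (V ↪ W)), g (F.map φ).edgeSet :=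
  Finset.sum_image_le_of_nonneg fun _ _ ↦ hg _

theorem Strictly1Balanced.sum_pow_ncard_union_mul_pow_le (hF : Strictly1Balanced F) {p L : ℝ}
    (hp : 0 ≤ p) (hL : 1 ≤ L) (hn : n ≠ 0) (hr : r ≠ 0) (hpn : p ^ edgeCnt F * n ^ (r - 1) ≤ L)
    (X : Set (Fin n)) (φ : Fin r ↪ Fin n) :
    (∑ T ∈ copyEdgeSets F X with (F.map φ).edgeSet ≠ T ∧ ¬Disjoint (F.map φ).edgeSet T,
        p ^ ((F.map φ).edgeSet ∪ T).ncard) * n ^ (r - 1) ≤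
      (r + 1) ^ r * (L ^ 2 * n ^ (-(1 / edgeCnt F : ℝ))) := by
  set ρ : ℝ := L ^ 2 * n ^ (-(1 / edgeCnt F : ℝ))
  set S := (F.map φ).edgeSet
  let g (T : Set (Sym2 (Fin n))) : ℝ :=
    if S ≠ T ∧ ¬Disjoint S T then p ^ (S ∪ T).ncard * n ^ (2 * r - 1) else 0
  have hg (T : Set (Sym2 (Fin n))) : 0 ≤ g T := by positivity
  have hgψ (ψ : Fin r ↪ Fin n) : g (F.map ψ).edgeSet ≤ ρ * n ^ (ψ ⁻¹' Set.range φ).ncard := by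
    simp only [g]
    split_ifs with h
    · exact hF.pow_ncard_union_mul_pow_le hp hL hn hpn h.1 h.2
    · positivity
  refine le_of_mul_le_mul_right ?_ (show (0 : ℝ) < n ^ r by positivity)
  calc (∑ T ∈ copyEdgeSets F X with S ≠ T ∧ ¬Disjoint S T, p ^ (S ∪ T).ncard) *
        n ^ (r - 1) * n ^ r
      = ∑ T ∈ copyEdgeSets F X, g T := by
        rw [mul_assoc, ← pow_add, show r - 1 + r = 2 * r - 1 by lia, Finset.sum_mul,
          Finset.sum_filter]
    _ ≤ ∑ ψ : Fin r ↪ Fin n, g (F.map ψ).edgeSet :=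
        (sum_copyEdgeSets_le_sum hg).trans (Finset.sum_le_univ_sum_of_nonneg fun ψ ↦ hg _)
    _ ≤ ρ * (∑ ψ : Fin r ↪ Fin n, n ^ (ψ ⁻¹' Set.range φ).ncard : ℕ) := by
        rw [Nat.cast_sum, Finset.mul_sum]
        exact Finset.sum_le_sum fun ψ _ ↦ (hgψ ψ).trans_eq (by rw [Nat.cast_pow])
    _ ≤ ρ * (((r + 1) * n) ^ r : ℕ) := by
        gcongr
        refine (sum_embedding_pow_ncard_preimage_le _ n).trans_eq ?_
        simp [Set.ncard_range_of_injective φ.injective, add_one_mul]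
    _ = (r + 1) ^ r * ρ * n ^ r := by
        push_cast
        rw [mul_pow]
        ring

theorem Strictly1Balanced.sum_sum_pow_ncard_union_le (hF : Strictly1Balanced F) {p L : ℝ}
    (hp : 0 ≤ p) (hL : 1 ≤ L) (hn : n ≠ 0) (hr : r ≠ 0) (hpn : p ^ edgeCnt F * n ^ (r - 1) ≤ L)
    (X : Finset (Fin n)) :
    ∑ S ∈ copyEdgeSets F (X : Set (Fin n)), ∑ T ∈ copyEdgeSets F (X : Set (Fin n))
      with S ≠ T ∧ ¬Disjoint S T, p ^ (S ∪ T).ncard ≤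
      #X * (r.factorial * (r + 1) ^ r) * (L ^ 2 * n ^ (-(1 / edgeCnt F : ℝ))) := by
  have : NeZero r := ⟨hr⟩
  set ρ : ℝ := L ^ 2 * n ^ (-(1 / edgeCnt F : ℝ))
  let g (S : Set (Sym2 (Fin n))) : ℝ :=
    ∑ T ∈ copyEdgeSets F (X : Set (Fin n)) with S ≠ T ∧ ¬Disjoint S T, p ^ (S ∪ T).ncard
  have hg (φ : Fin r ↪ Fin n) : g (F.map φ).edgeSet ≤ (r + 1) ^ r * ρ / n ^ (r - 1) :=
    (le_div_iff₀ (by positivity)).2 (hF.sum_pow_ncard_union_mul_pow_le hp hL hn hr hpn X φ)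
  calc ∑ S ∈ copyEdgeSets F (X : Set (Fin n)), g S
      ≤ ∑ φ ∈ ({φ | ¬Disjoint (Set.range φ) X} : Finset (Fin r ↪ Fin n)), g (F.map φ).edgeSet :=
        sum_copyEdgeSets_le_sum fun S ↦ Finset.sum_nonneg fun T _ ↦ by positivity
    _ ≤ ∑ φ ∈ ({φ | ¬Disjoint (Set.range φ) X} : Finset (Fin r ↪ Fin n)),
          (r + 1) ^ r * ρ / n ^ (r - 1) := Finset.sum_le_sum fun φ _ ↦ hg φ
    _ ≤ (#X * (r.factorial * n ^ (r - 1)) : ℕ) * ((r + 1) ^ r * ρ / n ^ (r - 1)) := by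
        rw [Finset.sum_const, nsmul_eq_mul]
        gcongr
        simpa using card_embedding_not_disjoint_le (V := Fin r) X
    _ = #X * (r.factorial * (r + 1) ^ r) * ρ := by
        push_cast
        field_simp

end OverlapSum

section FiniteEstimates

variable {r n : ℕ} {F : SimpleGraph (Fin r)}

theorem autCard_pos (F : SimpleGraph (Fin r)) : 0 < autCard F :=
  have : Nonempty (F ≃g F) := ⟨.refl⟩
  have : Finite (F ≃g F) := .of_injective _ RelIso.toEquiv_injective
  Nat.card_pos

/-- The number of copies of `F` in the complete graph on `n` vertices that contain a given
vertex, for `F` without isolated vertices. -/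
def numCopiesThrough (F : SimpleGraph (Fin r)) (n : ℕ) : ℝ :=
  r.factorial * (n - 1).choose (r - 1) / autCard F

theorem numCopiesThrough_nonneg (F : SimpleGraph (Fin r)) (n : ℕ) : 0 ≤ numCopiesThrough F n := by
  unfold numCopiesThrough
  positivity

theorem card_copyEdgeSets_singleton (hF : F.support = Set.univ) (hr : r ≠ 0) (x : Fin n) :
    (#(copyEdgeSets F {x}) : ℝ) = numCopiesThrough F n := by
  have : NeZero r := ⟨hr⟩
  rw [numCopiesThrough, eq_div_iff (mod_cast (autCard_pos F).ne')]
  exact mod_cast (by simpa [autCard] using card_copyEdgeSets_singleton_mul hF x)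

theorem numCopiesThrough_le (F : SimpleGraph (Fin r)) (n : ℕ) :
    numCopiesThrough F n ≤ r.factorial * n ^ (r - 1) := by
  have hchoose : (n - 1).choose (r - 1) ≤ n ^ (r - 1) :=
    (Nat.choose_le_pow _ _).trans (Nat.pow_le_pow_left (Nat.sub_le _ _) _)
  refine (div_le_self (by positivity) (mod_cast autCard_pos F)).trans ?_
  exact mod_cast Nat.mul_le_mul_left _ hchoose

theorem exp_neg_add_two_mul_sq_le_one_sub {t : ℝ} (h : t ≤ 1 / 2) :
    Real.exp (-(t + 2 * t ^ 2)) ≤ 1 - t := by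
  rw [Real.exp_neg, inv_le_iff_one_le_mul₀ (Real.exp_pos _)]
  calc 1 ≤ (1 - t) * (t + 2 * t ^ 2 + 1) := by nlinarith [mul_nonneg (sq_nonneg t) (sub_nonneg.2 h)]
    _ ≤ (1 - t) * Real.exp (t + 2 * t ^ 2) := by
        gcongr
        · linarith
        · exact Real.add_one_le_exp _

/-- The error in the exponent of the estimates for the probability that given vertices are
`F`-isolated in `G(n,p)`, when `p ^ e(F) * n ^ (r - 1) ≤ L`. -/
def errorTerm (F : SimpleGraph (Fin r)) (n : ℕ) (L : ℝ) : ℝ :=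
  (2 * (r.factorial * (r + 1) ^ r) + r ^ 2) * (L ^ 2 * n ^ (-(1 / edgeCnt F : ℝ)))

variable {p : I} {L : ℝ}

theorem two_mul_factorial_mul_le_errorTerm (F : SimpleGraph (Fin r)) (n : ℕ) (L : ℝ) :
    2 * r.factorial * (L ^ 2 * n ^ (-(1 / edgeCnt F : ℝ))) ≤ errorTerm F n L := by
  have hpow : (1 : ℝ) ≤ (r + 1) ^ r := one_le_pow₀ (by simp)
  rw [errorTerm]
  gcongr
  nlinarith [show (0 : ℝ) < r.factorial by positivity]

theorem Strictly1Balanced.setBernoulli_real_avoiding_copyEdgeSets_le (hF : Strictly1Balanced F)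
    (hr : r ≠ 0) (hn : n ≠ 0) (hL : 1 ≤ L) (hp : (p : ℝ) ^ edgeCnt F * n ^ (r - 1) ≤ L)
    (X : Finset (Fin n)) :
    setBer(Sym2.diagSetᶜ, p).real (avoiding (copyEdgeSets F (X : Set (Fin n)))) ≤
      Real.exp (-(#(copyEdgeSets F (X : Set (Fin n))) * p ^ edgeCnt F) +
        #X * (r.factorial * (r + 1) ^ r) * (L ^ 2 * n ^ (-(1 / edgeCnt F : ℝ)))) := by
  refine (setBernoulli_real_avoiding_le_exp _ p _).trans (Real.exp_le_exp.2 ?_)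
  rw [Finset.sum_congr rfl fun S hS ↦ setBernoulli_real_Ici_of_mem_copyEdgeSets p hS,
    Finset.sum_const, nsmul_eq_mul, ← edgeCnt]
  gcongr
  refine le_trans (Finset.sum_le_sum fun S hS ↦ Finset.sum_le_sum fun T hT ↦ ?_)
    (hF.sum_sum_pow_ncard_union_le p.2.1 hL hn hr hp X)
  exact (setBernoulli_real_Ici p (Set.union_subset (subset_compl_diagSet_of_mem_copyEdgeSets hS)
    (subset_compl_diagSet_of_mem_copyEdgeSets (Finset.mem_filter.1 hT).1)) (Set.toFinite _)).le

theorem Strictly1Balanced.setBernoulli_real_avoiding_copyEdgeSets_singleton_le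
    (hF : Strictly1Balanced F) (hr : r ≠ 0) (hs : edgeCnt F ≠ 0) (hL : 1 ≤ L)
    (hp : (p : ℝ) ^ edgeCnt F * n ^ (r - 1) ≤ L) (x : Fin n) :
    setBer(Sym2.diagSetᶜ, p).real (avoiding (copyEdgeSets F {x})) ≤
      Real.exp (-(numCopiesThrough F n * p ^ edgeCnt F) + errorTerm F n L) := by
  have h := hF.setBernoulli_real_avoiding_copyEdgeSets_le hr x.pos.ne' hL hp {x}
  rw [Finset.coe_singleton, card_copyEdgeSets_singleton (hF.support_eq_univ (by lia)) hr] at h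
  refine h.trans (Real.exp_le_exp.2 ?_)
  rw [Finset.card_singleton, Nat.cast_one, one_mul, errorTerm]
  gcongr
  nlinarith [show (0 : ℝ) ≤ r.factorial * (r + 1) ^ r by positivity]

theorem Strictly1Balanced.setBernoulli_real_avoiding_copyEdgeSets_inter_le
    (hF : Strictly1Balanced F) (hr : 2 ≤ r) (hs : edgeCnt F ≠ 0) (hL : 1 ≤ L)
    (hp : (p : ℝ) ^ edgeCnt F * n ^ (r - 1) ≤ L) {x y : Fin n} (hxy : x ≠ y) :
    setBer(Sym2.diagSetᶜ, p).real
        (avoiding (copyEdgeSets F {x}) ∩ avoiding (copyEdgeSets F {y})) ≤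
      Real.exp (-(2 * (numCopiesThrough F n * p ^ edgeCnt F)) + errorTerm F n L) := by
  have hn : (1 : ℝ) ≤ n := mod_cast x.pos
  have h := hF.setBernoulli_real_avoiding_copyEdgeSets_le (by lia) x.pos.ne' hL hp {x, y}
  rw [← avoiding_union, ← copyEdgeSets_union, ← Set.insert_eq, ← Finset.coe_pair]
  refine h.trans (Real.exp_le_exp.2 ?_)
  have hsupp := hF.support_eq_univ (by lia)
  have hcard : 2 * numCopiesThrough F n ≤
      #(copyEdgeSets F {x, y}) + r ^ 2 * n ^ (r - 2) := by
    rw [two_mul]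
    nth_rw 1 [← card_copyEdgeSets_singleton hsupp (by lia) x]
    rw [← card_copyEdgeSets_singleton hsupp (by lia) y]
    exact mod_cast (by simpa using card_copyEdgeSets_singleton_add_le hsupp hxy)
  have hsmall : (p : ℝ) ^ edgeCnt F * n ^ (r - 2) ≤ L ^ 2 * n ^ (-(1 / edgeCnt F : ℝ)) := by
    refine pow_mul_pow_le_of_pow_mul_pow_le p.2.1 hL hn hs hp ?_ (by lia)
    rw [show r - 1 = r - 2 + 1 by lia, add_one_mul]
    lia
  rw [Finset.card_pair hxy, Finset.coe_pair, errorTerm]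
  have := mul_le_mul_of_nonneg_right hcard (pow_nonneg p.2.1 (edgeCnt F))
  push_cast
  nlinarith [mul_le_mul_of_nonneg_left hsmall (sq_nonneg (r : ℝ))]

theorem Strictly1Balanced.exp_le_setBernoulli_real_avoiding_copyEdgeSets_singleton
    (hF : Strictly1Balanced F) (hr : 2 ≤ r) (hs : edgeCnt F ≠ 0) (hL : 1 ≤ L)
    (hp : (p : ℝ) ^ edgeCnt F * n ^ (r - 1) ≤ L) (herr : errorTerm F n L ≤ 1 / 2) (x : Fin n) :
    Real.exp (-(numCopiesThrough F n * p ^ edgeCnt F) - errorTerm F n L) ≤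
      setBer(Sym2.diagSetᶜ, p).real (avoiding (copyEdgeSets F {x})) := by
  have hn : (1 : ℝ) ≤ n := mod_cast x.pos
  set t : ℝ := p ^ edgeCnt F with ht
  have hle := two_mul_factorial_mul_le_errorTerm F n L
  have ht2 : t ≤ 1 / 2 := by
    have hsmall : (p : ℝ) ^ edgeCnt F * n ^ 0 ≤ L ^ 2 * n ^ (-(1 / edgeCnt F : ℝ)) :=
      pow_mul_pow_le_of_pow_mul_pow_le p.2.1 hL hn hs hp
        (by nlinarith [Nat.mul_pos (Nat.pos_of_ne_zero hs) (Nat.sub_pos_of_lt hr)]) (by lia)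
    have hfact : (1 : ℝ) ≤ r.factorial := mod_cast r.factorial_pos
    nlinarith [show (0 : ℝ) ≤ L ^ 2 * n ^ (-(1 / edgeCnt F : ℝ)) by positivity]
  have hsq : numCopiesThrough F n * (2 * t ^ 2) ≤ errorTerm F n L := by
    have hsmall : (p : ℝ) ^ (2 * edgeCnt F) * n ^ (r - 1) ≤ L ^ 2 * n ^ (-(1 / edgeCnt F : ℝ)) :=
      pow_mul_pow_le_of_pow_mul_pow_le p.2.1 hL hn hs hp
        (by nlinarith [Nat.mul_pos (Nat.pos_of_ne_zero hs) (Nat.sub_pos_of_lt hr)]) (by lia)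
    calc numCopiesThrough F n * (2 * t ^ 2) ≤ r.factorial * n ^ (r - 1) * (2 * t ^ 2) := by
          gcongr
          exact numCopiesThrough_le F n
      _ = 2 * r.factorial * ((p : ℝ) ^ (2 * edgeCnt F) * n ^ (r - 1)) := by rw [ht]; ring
      _ ≤ 2 * r.factorial * (L ^ 2 * n ^ (-(1 / edgeCnt F : ℝ))) := by gcongr
      _ ≤ errorTerm F n L := hle
  calc Real.exp (-(numCopiesThrough F n * t) - errorTerm F n L)
      ≤ Real.exp (-(t + 2 * t ^ 2)) ^ #(copyEdgeSets F {x}) := by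
        rw [← Real.exp_nat_mul, Real.exp_le_exp,
          card_copyEdgeSets_singleton (hF.support_eq_univ (by lia)) (by lia)]
        linarith
    _ ≤ (1 - t) ^ #(copyEdgeSets F {x}) := by
        gcongr
        exact exp_neg_add_two_mul_sq_le_one_sub ht2
    _ = ∏ S ∈ copyEdgeSets F {x}, (1 - setBer(Sym2.diagSetᶜ, p).real (Set.Ici S)) := by
        rw [Finset.prod_congr rfl fun S hS ↦ by
          rw [setBernoulli_real_Ici_of_mem_copyEdgeSets p hS, ← edgeCnt, ← ht], Finset.prod_const]
    _ ≤ setBer(Sym2.diagSetᶜ, p).real (avoiding (copyEdgeSets F {x})) :=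
        prod_one_sub_le_setBernoulli_real_avoiding _ p _

end FiniteEstimates

section Threshold

variable {r n : ℕ} {F : SimpleGraph (Fin r)} {p q : I} {L : ℝ}

theorem Strictly1Balanced.one_div_le_gnpProb_exists_fIsolated (hF : Strictly1Balanced F)
    (hr : 2 ≤ r) (hs : edgeCnt F ≠ 0) (hn : n ≠ 0) (hL : 1 ≤ L)
    (hp : (p : ℝ) ^ edgeCnt F * n ^ (r - 1) ≤ L) (herr : errorTerm F n L ≤ 1 / 2) :
    1 / (Real.exp (numCopiesThrough F n * p ^ edgeCnt F - Real.log n + errorTerm F n L) +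
      Real.exp (3 * errorTerm F n L)) ≤ gnpProb n p fun G ↦ ∃ x, FIsolated F G x := by
  have : NeZero n := ⟨hn⟩
  set m := numCopiesThrough F n * p ^ edgeCnt F
  set δ := errorTerm F n L
  have hfirst : 1 / (n * Real.exp (-m - δ)) = Real.exp (m - Real.log n + δ) := by
    nth_rw 1 [← Real.exp_log (show (0 : ℝ) < n by positivity)]
    rw [← Real.exp_add, one_div, ← Real.exp_neg]
    ring_nf
  have hsecond : Real.exp (-(2 * m) + δ) / Real.exp (-m - δ) ^ 2 = Real.exp (3 * δ) := by
    rw [← Real.exp_nat_mul, ← Real.exp_sub]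
    push_cast
    ring_nf
  have h := one_div_le_measureReal_biUnion (setBer(Sym2.diagSetᶜ, p)) (s := Finset.univ)
    (B := fun x : Fin n ↦ avoiding (copyEdgeSets F {x}))
    (fun x _ ↦ (Set.toFinite _).measurableSet) Finset.univ_nonempty (Real.exp_pos _)
    (Real.exp_pos _).le
    (fun x _ ↦ hF.exp_le_setBernoulli_real_avoiding_copyEdgeSets_singleton hr hs hL hp herr x)
    (fun x _ y _ ↦ hF.setBernoulli_real_avoiding_copyEdgeSets_inter_le hr hs hL hp)
  rw [Finset.card_univ, Fintype.card_fin, hfirst, hsecond] at h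
  simpa [gnpProb_exists_fIsolated] using h

theorem Strictly1Balanced.one_sub_exp_le_gnpProb_forall_not_fIsolated (hF : Strictly1Balanced F)
    (hr : r ≠ 0) (hs : edgeCnt F ≠ 0) (hn : n ≠ 0) (hL : 1 ≤ L)
    (hq : (q : ℝ) ^ edgeCnt F * n ^ (r - 1) ≤ L) (hqp : q ≤ p) :
    1 - Real.exp (Real.log n - numCopiesThrough F n * q ^ edgeCnt F + errorTerm F n L) ≤
      gnpProb n p fun G ↦ ∀ x, ¬FIsolated F G x := by
  set m := numCopiesThrough F n * q ^ edgeCnt F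
  set δ := errorTerm F n L
  rw [gnpProb_forall_not_fIsolated]
  gcongr
  calc setBer(Sym2.diagSetᶜ, p).real (⋃ x : Fin n, avoiding (copyEdgeSets F {x}))
      ≤ ∑ x : Fin n, setBer(Sym2.diagSetᶜ, p).real (avoiding (copyEdgeSets F {x})) :=
        measureReal_iUnion_fintype_le _
    _ ≤ ∑ _x : Fin n, Real.exp (-m + δ) := Finset.sum_le_sum fun x _ ↦
        (setBernoulli_real_anti_of_isLowerSet hqp (isLowerSet_avoiding _)
          (Set.toFinite _).measurableSet).trans
        (hF.setBernoulli_real_avoiding_copyEdgeSets_singleton_le hr hs hL hq x)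
    _ = Real.exp (Real.log n - m + δ) := by
        rw [Finset.sum_const, Finset.card_univ, Fintype.card_fin, nsmul_eq_mul]
        nth_rw 1 [← Real.exp_log (show (0 : ℝ) < n by positivity)]
        rw [← Real.exp_add]
        ring_nf

theorem gnpProb_le_one (p : I) (P : SimpleGraph (Fin n) → Prop) : gnpProb n p P ≤ 1 := by
  rw [gnpProb_eq_setBernoulli_real]
  exact measureReal_le_one

theorem isBigO_pow_numCopiesThrough (F : SimpleGraph (Fin r)) :
    (fun n : ℕ ↦ (n : ℝ) ^ (r - 1)) =O[atTop] numCopiesThrough F := by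
  have hsub : (fun n : ℕ ↦ (n : ℝ)) =O[atTop] fun n : ℕ ↦ ((n - 1 : ℕ) : ℝ) := by
    refine .of_bound 2 ?_
    filter_upwards [eventually_ge_atTop 2] with n hn
    rw [Real.norm_natCast, Real.norm_natCast]
    exact mod_cast (by lia : n ≤ 2 * (n - 1))
  have hchoose : (fun n : ℕ ↦ ((n - 1 : ℕ) : ℝ) ^ (r - 1)) =O[atTop]
      fun n : ℕ ↦ ((n - 1).choose (r - 1) : ℝ) :=
    (isTheta_choose (r - 1)).symm.isBigO.comp_tendsto (tendsto_sub_atTop_nat 1)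
  refine ((hsub.pow (r - 1)).trans hchoose).trans (.of_bound (autCard F / r.factorial) ?_)
  filter_upwards with n
  have haut := (autCard_pos F).ne'
  rw [Real.norm_natCast, Real.norm_of_nonneg (numCopiesThrough_nonneg F n), numCopiesThrough]
  field_simp
  rfl

theorem exists_eventually_mul_pow_le (F : SimpleGraph (Fin r)) (c : ℝ) :
    ∃ K, ∀ᶠ n : ℕ in atTop, 1 ≤ K * Real.log n ∧ ∀ t : ℝ, 0 ≤ t →
      numCopiesThrough F n * t ≤ c * Real.log n → t * n ^ (r - 1) ≤ K * Real.log n := by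
  obtain ⟨C, hC0, hC⟩ := (isBigO_pow_numCopiesThrough F).exists_pos
  have hlog : Tendsto (fun n : ℕ ↦ Real.log n) atTop atTop :=
    Real.tendsto_log_atTop.comp tendsto_natCast_atTop_atTop
  refine ⟨max 1 (C * c), ?_⟩
  filter_upwards [hC.bound, hlog.eventually_ge_atTop 1] with n hn hlogn
  rw [Real.norm_of_nonneg (by positivity), Real.norm_of_nonneg (numCopiesThrough_nonneg F n)] at hn
  refine ⟨one_le_mul_of_one_le_of_one_le (le_max_left ..) hlogn, fun t ht htc ↦ ?_⟩
  calc t * n ^ (r - 1) ≤ t * (C * numCopiesThrough F n) := by gcongr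
    _ = C * (numCopiesThrough F n * t) := by ring
    _ ≤ C * (c * Real.log n) := by gcongr
    _ = C * c * Real.log n := by ring
    _ ≤ max 1 (C * c) * Real.log n := by gcongr; exact le_max_right ..

theorem tendsto_errorTerm (hs : edgeCnt F ≠ 0) (K : ℝ) :
    Tendsto (fun n : ℕ ↦ errorTerm F n (K * Real.log n)) atTop (nhds 0) := by
  have hlog : Tendsto (fun n : ℕ ↦ Real.log n ^ (2 : ℝ) / n ^ (1 / edgeCnt F : ℝ)) atTop (nhds 0) :=
    ((isLittleO_log_rpow_rpow_atTop 2 (by positivity)).tendsto_div_nhds_zero).comp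
      tendsto_natCast_atTop_atTop
  convert hlog.const_mul ((2 * (r.factorial * (r + 1) ^ r) + r ^ 2) * K ^ 2 : ℝ) using 2 with n
  · rw [errorTerm, Real.rpow_neg n.cast_nonneg, Real.rpow_two]
    ring
  · simp

theorem exists_le_mul_pow_eq {N a : ℝ} {s : ℕ} (hs : s ≠ 0) (ha : 0 ≤ a) (h : a ≤ N * p ^ s) :
    ∃ q ≤ p, N * (q : ℝ) ^ s = a := by
  have hcont : Continuous fun q : I ↦ N * (q : ℝ) ^ s := by fun_prop
  obtain ⟨q, hq, hqa⟩ := intermediate_value_Icc (show 0 ≤ p from p.2.1) hcont.continuousOn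
    ⟨by simpa [hs] using ha, h⟩
  exact ⟨q, hq.2, hqa⟩

theorem tendsto_mul_log_atBot {c : ℝ} (hc : c < 0) :
    Tendsto (fun n : ℕ ↦ c * Real.log n) atTop atBot :=
  (Real.tendsto_log_atTop.comp tendsto_natCast_atTop_atTop).const_mul_atTop_of_neg hc

theorem Strictly1Balanced.tendsto_gnpProb_exists_fIsolated (hF : Strictly1Balanced F)
    (hr : 2 ≤ r) (hs : edgeCnt F ≠ 0) {c : ℝ} (hc : c < 1) {p : ℕ → I}
    (hp : ∀ᶠ n : ℕ in atTop, numCopiesThrough F n * p n ^ edgeCnt F ≤ c * Real.log n) :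
    Tendsto (fun n ↦ gnpProb n (p n) fun G ↦ ∃ x, FIsolated F G x) atTop (nhds 1) := by
  obtain ⟨K, hK⟩ := exists_eventually_mul_pow_le F c
  have hδ := tendsto_errorTerm hs K
  have hbound : Tendsto (fun n : ℕ ↦
      1 / (Real.exp ((c - 1) * Real.log n + errorTerm F n (K * Real.log n)) +
        Real.exp (3 * errorTerm F n (K * Real.log n)))) atTop (nhds 1) := by
    have hzero := Real.tendsto_exp_atBot.comp
      ((tendsto_mul_log_atBot (sub_neg.2 hc)).atBot_add hδ)
    have hone := (Real.continuous_exp.tendsto _).comp (hδ.const_mul 3)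
    simpa using (hzero.add hone).inv₀ (by simp)
  refine tendsto_of_tendsto_of_tendsto_of_le_of_le' hbound tendsto_const_nhds ?_
    (.of_forall fun n ↦ gnpProb_le_one (p n) _)
  filter_upwards [hp, hK, hδ.eventually_le_const (by norm_num : (0 : ℝ) < 1 / 2),
    eventually_ne_atTop 0] with n hpn ⟨hL, hKn⟩ hδn hn
  refine le_trans ?_ (hF.one_div_le_gnpProb_exists_fIsolated hr hs hn hL
    (hKn _ (pow_nonneg (p n).2.1 _) hpn) hδn)
  gcongr
  linarith

theorem Strictly1Balanced.tendsto_gnpProb_forall_not_fIsolated (hF : Strictly1Balanced F)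
    (hr : r ≠ 0) (hs : edgeCnt F ≠ 0) {c : ℝ} (hc : 1 < c) {p : ℕ → I}
    (hp : ∀ᶠ n : ℕ in atTop, c * Real.log n ≤ numCopiesThrough F n * p n ^ edgeCnt F) :
    Tendsto (fun n ↦ gnpProb n (p n) fun G ↦ ∀ x, ¬FIsolated F G x) atTop (nhds 1) := by
  obtain ⟨K, hK⟩ := exists_eventually_mul_pow_le F c
  have hbound : Tendsto (fun n : ℕ ↦
      1 - Real.exp ((1 - c) * Real.log n + errorTerm F n (K * Real.log n))) atTop (nhds 1) := by
    have hzero := Real.tendsto_exp_atBot.comp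
      ((tendsto_mul_log_atBot (sub_neg.2 hc)).atBot_add (tendsto_errorTerm hs K))
    simpa using hzero.const_sub 1
  refine tendsto_of_tendsto_of_tendsto_of_le_of_le' hbound tendsto_const_nhds ?_
    (.of_forall fun n ↦ gnpProb_le_one (p n) _)
  filter_upwards [hp, hK, eventually_ne_atTop 0] with n hpn ⟨hL, hKn⟩ hn
  obtain ⟨q, hqp, hq⟩ := exists_le_mul_pow_eq hs (by positivity) hpn
  refine le_trans (le_of_eq ?_) (hF.one_sub_exp_le_gnpProb_forall_not_fIsolated hr hs hn hL
    (hKn _ (pow_nonneg q.2.1 _) hq.le) hqp)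
  rw [hq, one_sub_mul]

theorem numCopiesThrough_mul_pstar_pow (F : SimpleGraph (Fin r)) (hs : edgeCnt F ≠ 0)
    (hn : r - 1 ≤ n - 1) :
    numCopiesThrough F n * pstar F n ^ edgeCnt F = Real.log n := by
  have haut := (autCard_pos F).ne'
  have hchoose := (Nat.choose_pos hn).ne'
  rw [pstar, ← Real.rpow_natCast, ← Real.rpow_mul (by positivity),
    one_div_mul_cancel (mod_cast hs), Real.rpow_one, numCopiesThrough]
  field_simp

theorem pstar_pos (F : SimpleGraph (Fin r)) (hn : r - 1 ≤ n - 1) (hn2 : 2 ≤ n) :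
    0 < pstar F n := by
  have haut := autCard_pos F
  have hchoose := Nat.choose_pos hn
  have hlog : 0 < Real.log n := Real.log_pos (mod_cast hn2)
  unfold pstar
  positivity

theorem numCopiesThrough_mul_pow_le (F : SimpleGraph (Fin r)) (hs : edgeCnt F ≠ 0)
    (hn : r - 1 ≤ n - 1) {a t : ℝ} (ht : 0 ≤ t) (h : t ≤ a * pstar F n) :
    numCopiesThrough F n * t ^ edgeCnt F ≤ a ^ edgeCnt F * Real.log n := by
  rw [← numCopiesThrough_mul_pstar_pow F hs hn, mul_left_comm, ← mul_pow]
  exact mul_le_mul_of_nonneg_left (pow_le_pow_left₀ ht h _) (numCopiesThrough_nonneg F n)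

theorem le_numCopiesThrough_mul_pow (F : SimpleGraph (Fin r)) (hs : edgeCnt F ≠ 0)
    (hn : r - 1 ≤ n - 1) {a t : ℝ} (ha : 0 ≤ a) (h : a * pstar F n ≤ t) :
    a ^ edgeCnt F * Real.log n ≤ numCopiesThrough F n * t ^ edgeCnt F := by
  have hpstar : 0 ≤ pstar F n := by
    unfold pstar
    positivity
  rw [← numCopiesThrough_mul_pstar_pow F hs hn, mul_left_comm, ← mul_pow]
  exact mul_le_mul_of_nonneg_left (pow_le_pow_left₀ (by positivity) h _)
    (numCopiesThrough_nonneg F n)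

end Threshold

/-- For a strictly 1-balanced graph `F` with `s ≥ 1` edges on `r ≥ 2`
vertices, `p* = ((aut F / r!)·ln n / C(n-1,r-1))^(1/s)` is a sharp threshold for the
disappearance of `F`-isolated vertices in `G(n,p)`. -/
theorem sharp_threshold_F_isolated {r s : ℕ} (hr : 2 ≤ r) (hs : 1 ≤ s)
    (F : SimpleGraph (Fin r)) (hFs : edgeCnt F = s) (hF : Strictly1Balanced F)
    (ε : ℝ) (hε : 0 < ε) (p : ℕ → ℝ) (hp : ∀ n, 0 ≤ p n ∧ p n ≤ 1) :
    ((∀ n, p n ≤ (1 - ε) * pstar F n) →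
      Filter.Tendsto (fun n : ℕ => gnpProb n (p n) fun G => ∃ x, FIsolated F G x)
        Filter.atTop (nhds 1)) ∧
    ((∀ n, p n ≥ (1 + ε) * pstar F n) →
      Filter.Tendsto (fun n : ℕ => gnpProb n (p n) fun G => ∀ x, ¬FIsolated F G x)
        Filter.atTop (nhds 1)) := by
  subst hFs
  have hs : edgeCnt F ≠ 0 := by lia
  set pI : ℕ → I := fun n ↦ ⟨p n, hp n⟩
  constructor <;> intro hpstar
  · have hpos : 0 < pstar F r := pstar_pos F le_rfl hr
    have hε1 : 0 ≤ 1 - ε := nonneg_of_mul_nonneg_left ((hp r).1.trans (hpstar r)) hpos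
    have hc : (1 - ε) ^ edgeCnt F < 1 := pow_lt_one₀ hε1 (by linarith) hs
    refine hF.tendsto_gnpProb_exists_fIsolated hr hs hc (p := pI) ?_
    filter_upwards [eventually_ge_atTop r] with n hn
    exact numCopiesThrough_mul_pow_le F hs (by lia) (hp n).1 (hpstar n)
  · have hc : 1 < (1 + ε) ^ edgeCnt F := one_lt_pow₀ (by linarith) hs
    refine hF.tendsto_gnpProb_forall_not_fIsolated (by lia) hs hc (p := pI) ?_
    filter_upwards [eventually_ge_atTop r] with n hn
    exact le_numCopiesThrough_mul_pow F hs (by lia) (by linarith) (hpstar n)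

end
end

section
/- Let F be a strictly 1-balanced graph on r ≥ 3 vertices, let ε > 0 be a constant, and let π = π(n) ≤ n^ε / ((r!/aut(F)) · C(n−1, r−1)). Let C_1 and C_2 be two distinct clean F-cycles with e(C_1), e(C_2) ≤ e(F) that are not vertex-disjoint, and let X be the number of copies of the F-graph C_1 ∪ C_2 in H_F(n,π). Then E[X] = O(n^{−1 + 2e(F)ε}) as n → ∞. -/
open scoped Classical
open Filter Asymptotics

noncomputable section

/-!
A fixed `F`-graph `H` has at most `n ^ v(H)` copies on `n` vertices, and each is present with
probability `π ^ e(H)`. Since `π = O(n ^ (ε - (r - 1)))`, the expected number of copies is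
`O(n ^ (v(H) - (r - 1) * e(H) + e(H) * ε))`, and it remains to see that `v(H) < (r - 1) * e(H)` for
`H = C₁ ∪ C₂`. A clean `F`-cycle spans exactly `r - 1` vertices per `F`-edge, whereas a nonempty
proper subset of its `F`-edges spans more than that. The common `F`-edges of `C₁` and `C₂` form
such a subset of one of the two cycles, unless there are none and the cycles just share vertices.
Hence `C₁` and `C₂` have more than `r - 1` common vertices per common `F`-edge, and
inclusion–exclusion gives the claim.
-/

section Maps

variable {r : ℕ} {V W : Type*} {F : SimpleGraph (Fin r)}

theorem FEdge.IsCopyOf.card_verts {h : FEdge V} (hh : h.IsCopyOf F) : h.1.card = r := by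
  obtain ⟨φ, hφ, hverts, -⟩ := hh
  rw [← Set.ncard_coe_finset, hverts, ← Set.image_univ, Set.ncard_image_of_injective _ hφ,
    Set.ncard_univ, Nat.card_fin]

theorem FEdge.IsCopyOf.mem_verts {h : FEdge V} (hh : h.IsCopyOf F) {e : Sym2 V} (he : e ∈ h.2)
    {x : V} (hx : x ∈ e) : x ∈ h.1 := by
  obtain ⟨φ, -, hverts, hedges⟩ := hh
  rw [← Finset.mem_coe, hedges] at he
  obtain ⟨e, -, rfl⟩ := he
  obtain ⟨y, -, rfl⟩ := Sym2.mem_map.1 hx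
  rw [← Finset.mem_coe, hverts]
  exact Set.mem_range_self y

theorem FEdge.map_congr [DecidableEq W] {h : FEdge V} (hh : h.IsCopyOf F) {f g : V → W}
    (hfg : Set.EqOn f g h.1) : h.map f = h.map g :=
  Prod.ext (Finset.image_congr hfg) <| Finset.image_congr fun _ he =>
    Sym2.map_congr fun _ hx => hfg (hh.mem_verts he hx)

theorem FEdge.map_map {U : Type*} [DecidableEq W] [DecidableEq U] (g : W → U) (f : V → W)
    (h : FEdge V) : (h.map f).map g = h.map (g ∘ f) := by
  simp only [FEdge.map, Finset.image_image, Sym2.map_comp]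

theorem FEdge.map_id [DecidableEq V] (h : FEdge V) : h.map id = h := by
  simp [FEdge.map]

theorem FGraph.Wf.injOn_map [DecidableEq W] {H : FGraph V} (hH : H.Wf F) {ψ : V → W}
    (hψ : Set.InjOn ψ H.1) : Set.InjOn (FEdge.map ψ) H.2 := by
  cases isEmpty_or_nonempty V
  · exact Set.injOn_of_subsingleton _ _
  have hinv : Set.LeftInvOn (FEdge.map (Function.invFunOn ψ H.1)) (FEdge.map ψ) H.2 := by
    intro h hh
    rw [FEdge.map_map, FEdge.map_congr (hH h hh).1 (g := id), FEdge.map_id]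
    exact fun x hx => hψ.leftInvOn_invFunOn ((hH h hh).2 hx)
  exact hinv.injOn

variable [DecidableEq V] {H K : FGraph V}

theorem FGraph.Wf.union (hH : H.Wf F) (hK : K.Wf F) : (H.union K).Wf F := by
  intro h hh
  rcases Finset.mem_union.1 hh with hh | hh
  · exact ⟨(hH h hh).1, (hH h hh).2.trans Finset.subset_union_left⟩
  · exact ⟨(hK h hh).1, (hK h hh).2.trans Finset.subset_union_right⟩

variable [DecidableEq W]

theorem FGraph.map_congr (hH : H.Wf F) {f g : V → W} (hfg : Set.EqOn f g H.1) :
    H.map f = H.map g :=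
  Prod.ext (Finset.image_congr hfg) <| Finset.image_congr fun h hh =>
    FEdge.map_congr (hH h hh).1 (hfg.mono (hH h hh).2)

theorem FGraph.IsoTo.card_edges {K : FGraph W} (hH : H.Wf F) (hK : H.IsoTo K) :
    K.2.card = H.2.card := by
  obtain ⟨ψ, hψ, rfl⟩ := hK
  exact Finset.card_image_of_injOn (hH.injOn_map hψ)

theorem FGraph.card_filter_isoTo_le [Fintype W] (hH : H.Wf F) :
    (Finset.univ.filter fun K : FGraph W => H.IsoTo K).card ≤ Fintype.card W ^ H.1.card := by
  have hle : Nat.card {K : FGraph W // H.IsoTo K} ≤ Nat.card (H.1 → W) := by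
    refine Nat.card_le_card_of_injective (fun K x => K.2.choose x) fun K L hKL => Subtype.ext ?_
    rw [← K.2.choose_spec.2, ← L.2.choose_spec.2]
    exact FGraph.map_congr hH fun x hx => congrFun hKL ⟨x, hx⟩
  simpa [Nat.card_eq_fintype_card, Fintype.card_subtype] using hle

end Maps

section Expectation

theorem sum_Icc_pow_mul_one_sub_pow {α R : Type*} [DecidableEq α] [CommRing R] {T A : Finset α}
    (hT : T ⊆ A) (p : R) :
    ∑ S ∈ Finset.Icc T A, p ^ S.card * (1 - p) ^ (A.card - S.card) = p ^ T.card := by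
  have hcard : ∀ S ∈ (A \ T).powerset, (T ∪ S).card = T.card + S.card := fun S hS =>
    Finset.card_union_of_disjoint <|
      Finset.disjoint_sdiff.mono_right (Finset.mem_powerset.1 hS)
  have hinj : Set.InjOn (T ∪ ·) ((A \ T).powerset : Set (Finset α)) := by
    intro S hS S' hS' h
    rw [Finset.mem_coe, Finset.mem_powerset] at hS hS'
    rw [← Finset.union_sdiff_cancel_left (Finset.disjoint_sdiff.mono_right hS),
      show T ∪ S = T ∪ S' from h,
      Finset.union_sdiff_cancel_left (Finset.disjoint_sdiff.mono_right hS')]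
  calc ∑ S ∈ Finset.Icc T A, p ^ S.card * (1 - p) ^ (A.card - S.card)
      = ∑ S ∈ (A \ T).powerset,
          p ^ T.card * (p ^ S.card * (1 - p) ^ ((A \ T).card - S.card)) := by
        rw [Finset.Icc_eq_image_powerset hT, Finset.sum_image hinj]
        refine Finset.sum_congr rfl fun S hS => ?_
        rw [hcard S hS, Finset.card_sdiff_of_subset hT, pow_add, mul_assoc, Nat.sub_add_eq]
    _ = p ^ T.card := by
        rw [← Finset.mul_sum, Finset.sum_pow_mul_eq_add_pow, add_sub_cancel, one_pow, mul_one]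

variable {r n : ℕ} {F : SimpleGraph (Fin r)}

theorem hfProb_superset (p : ℝ) (T : Finset (FEdge (Fin n))) :
    hfProb r n F p (T ⊆ ·) = if T ⊆ allFEdges r n F then p ^ T.card else 0 := by
  have hfilter : (allFEdges r n F).powerset.filter (T ⊆ ·) = Finset.Icc T (allFEdges r n F) := by
    ext S
    simp [and_comm]
  simp only [hfProb, hfExp, mul_ite, mul_one, mul_zero]
  rw [← Finset.sum_filter, hfilter]
  split_ifs with hT
  · exact sum_Icc_pow_mul_one_sub_pow hT p
  · rw [Finset.Icc_eq_empty hT, Finset.sum_empty]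

theorem hfExp_sum {ι : Type*} (p : ℝ) (I : Finset ι) (X : ι → Finset (FEdge (Fin n)) → ℝ) :
    hfExp r n F p (fun S => ∑ i ∈ I, X i S) = ∑ i ∈ I, hfExp r n F p (X i) := by
  simp only [hfExp, Finset.mul_sum]
  exact Finset.sum_comm

variable {V : Type*} [DecidableEq V] {H : FGraph V}

theorem copyCount_eq_sum (H : FGraph V) (S : Finset (FEdge (Fin n))) :
    (copyCount H S : ℝ) = ∑ K : FGraph (Fin n) with H.IsoTo K, if K.2 ⊆ S then 1 else 0 := by
  rw [copyCount, Nat.card_eq_fintype_card, Fintype.card_subtype, Finset.sum_boole,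
    Finset.filter_filter]
  simp only [and_comm]

theorem hfExp_copyCount (H : FGraph V) (p : ℝ) :
    hfExp r n F p (fun S => (copyCount H S : ℝ)) =
      ∑ K : FGraph (Fin n) with H.IsoTo K, hfProb r n F p (K.2 ⊆ ·) := by
  simp only [copyCount_eq_sum, hfExp_sum, hfProb]
  congr!

theorem abs_hfExp_copyCount_le (hH : H.Wf F) (n : ℕ) (p : ℝ) :
    |hfExp r n F p fun S => (copyCount H S : ℝ)| ≤ (n : ℝ) ^ H.1.card * |p| ^ H.2.card := by
  have hterm : ∀ K : FGraph (Fin n), H.IsoTo K →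
      |hfProb r n F p (K.2 ⊆ ·)| ≤ |p| ^ H.2.card := by
    intro K hK
    rw [hfProb_superset, hK.card_edges hH]
    split_ifs
    · rw [abs_pow]
    · rw [abs_zero]
      positivity
  calc |hfExp r n F p fun S => (copyCount H S : ℝ)|
      = |∑ K : FGraph (Fin n) with H.IsoTo K, hfProb r n F p (K.2 ⊆ ·)| := by
        rw [hfExp_copyCount]
    _ ≤ ∑ K : FGraph (Fin n) with H.IsoTo K, |p| ^ H.2.card :=
        (Finset.abs_sum_le_sum_abs _ _).trans <|
          Finset.sum_le_sum fun K hK => hterm K (Finset.mem_filter.1 hK).2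
    _ ≤ (n : ℝ) ^ H.1.card * |p| ^ H.2.card := by
        rw [Finset.sum_const, nsmul_eq_mul]
        gcongr
        exact_mod_cast (FGraph.card_filter_isoTo_le (W := Fin n) hH).trans_eq
          (by rw [Fintype.card_fin])

theorem isBigO_hfExp_copyCount (hH : H.Wf F) {π : ℕ → ℝ} {a : ℝ}
    (hπ : π =O[atTop] fun n => (n : ℝ) ^ a) :
    (fun n => hfExp r n F (π n) fun S => (copyCount H S : ℝ))
      =O[atTop] fun n => (n : ℝ) ^ (H.1.card + a * H.2.card) := by
  have hbound : (fun n => hfExp r n F (π n) fun S => (copyCount H S : ℝ))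
      =O[atTop] fun n => (n : ℝ) ^ H.1.card * π n ^ H.2.card :=
    isBigO_of_le _ fun n => by simpa using abs_hfExp_copyCount_le hH n (π n)
  have hpow := (isBigO_refl (fun n : ℕ => (n : ℝ) ^ H.1.card) atTop).mul (hπ.pow H.2.card)
  refine (hbound.trans hpow).congr' .rfl ?_
  filter_upwards [eventually_gt_atTop 0] with n hn
  rw [Real.rpow_add (by positivity), Real.rpow_natCast, Real.rpow_mul_natCast (by positivity)]

end Expectation

section Asymptotics

theorem isTheta_natCast_pred :
    (fun n : ℕ => ((n - 1 : ℕ) : ℝ)) =Θ[atTop] fun n : ℕ => (n : ℝ) := by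
  refine ⟨isBigO_of_le _ fun n => ?_, IsBigO.of_bound 2 ?_⟩
  · simp
  · filter_upwards [eventually_ge_atTop 2] with n hn
    rw [Real.norm_natCast, Real.norm_natCast]
    exact_mod_cast (by lia : n ≤ 2 * (n - 1))

theorem isTheta_choose_pred (k : ℕ) :
    (fun n : ℕ => ((n - 1).choose k : ℝ)) =Θ[atTop] fun n : ℕ => (n : ℝ) ^ k :=
  have hshift := tendsto_sub_atTop_nat 1
  IsTheta.trans ⟨(isTheta_choose k).1.comp_tendsto hshift, (isTheta_choose k).2.comp_tendsto hshift⟩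
    (isTheta_natCast_pred.pow k)

theorem isBigO_rpow_div_mul_choose_pred (ε c : ℝ) (k : ℕ) :
    (fun n : ℕ => (n : ℝ) ^ ε / (c * ((n - 1).choose k : ℝ)))
      =O[atTop] fun n : ℕ => (n : ℝ) ^ (ε - k) := by
  have hdiv : (fun n : ℕ => (n : ℝ) ^ ε / ((n - 1).choose k : ℝ))
      =O[atTop] fun n : ℕ => (n : ℝ) ^ ε / (n : ℝ) ^ k :=
    ((isTheta_refl _ _).div (isTheta_choose_pred k)).1
  refine (hdiv.const_mul_left c⁻¹).congr' (.of_forall fun n => ?_) ?_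
  · beta_reduce
    rw [← div_div, ← div_eq_inv_mul, div_right_comm]
  · filter_upwards [eventually_ne_atTop 0] with n hn
    rw [Real.rpow_sub_natCast (Nat.cast_ne_zero.2 hn)]

theorem isBigO_natCast_rpow_of_le {a b : ℝ} (hab : a ≤ b) :
    (fun n : ℕ => (n : ℝ) ^ a) =O[atTop] fun n : ℕ => (n : ℝ) ^ b := by
  refine IsBigO.of_norm_eventuallyLE ?_
  filter_upwards [eventually_ge_atTop 1] with n hn
  rw [Real.norm_of_nonneg (by positivity)]
  exact Real.rpow_le_rpow_of_exponent_le (mod_cast hn) hab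

end Asymptotics

section CleanCycles

theorem exists_mem_apply_notMem_of_isCycle {ι : Type*} [Finite ι] {σ : Equiv.Perm ι}
    (hσ : σ.IsCycle) (hfix : ∀ i, σ i ≠ i) {I : Set ι} (hne : I.Nonempty) (hI : I ≠ Set.univ) :
    ∃ i ∈ I, σ i ∉ I := by
  by_contra! hmaps
  obtain ⟨i, hi⟩ := hne
  refine hI (Set.eq_univ_of_forall fun j => ?_)
  obtain ⟨m, rfl⟩ := hσ.exists_pow_eq (hfix i) (hfix j)
  exact Set.MapsTo.perm_pow hmaps m hi

/-- The sets `A i` are arranged along the fixed-point-free cyclic permutation `σ`, with `v i` a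
vertex linking `A i` to the next set `A (σ i)`, and with no overlaps other than these links. If
there are only two sets, then both link vertices lie in both sets, so that a clean `F`-cycle of
length 2 is covered as well. -/
structure IsCyclicChain {ι V : Type*} (σ : Equiv.Perm ι) (A : ι → Finset V) (v : ι → V) :
    Prop where
  isCycle : σ.IsCycle
  apply_ne : ∀ i, σ i ≠ i
  injective : Function.Injective v
  mem : ∀ i, v i ∈ A i
  mem_next : ∀ i, v i ∈ A (σ i)
  eq_link : ∀ ⦃i j⦄, i ≠ j → ∀ ⦃x⦄, x ∈ A i → x ∈ A j →
    (x = v i ∧ σ i = j) ∨ (x = v j ∧ σ j = i)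

namespace IsCyclicChain

variable {ι V : Type*} [DecidableEq V] {σ : Equiv.Perm ι} {A : ι → Finset V} {v : ι → V}

theorem pairwise_disjoint_erase (h : IsCyclicChain σ A v) :
    Pairwise (Function.onFun Disjoint fun i => (A i).erase (v i)) := by
  intro i j hij
  refine Finset.disjoint_left.2 fun x hxi hxj => ?_
  rw [Finset.mem_erase] at hxi hxj
  rcases h.eq_link hij hxi.2 hxj.2 with ⟨hx, -⟩ | ⟨hx, -⟩
  exacts [hxi.1 hx, hxj.1 hx]

theorem card_biUnion_erase (h : IsCyclicChain σ A v) (I : Finset ι) :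
    (I.biUnion fun i => (A i).erase (v i)).card = ∑ i ∈ I, ((A i).card - 1) := by
  rw [Finset.card_biUnion (h.pairwise_disjoint_erase.set_pairwise _)]
  exact Finset.sum_congr rfl fun i _ => Finset.card_erase_of_mem (h.mem i)

theorem card_biUnion_univ [Fintype ι] (h : IsCyclicChain σ A v) :
    (Finset.univ.biUnion A).card = ∑ i, ((A i).card - 1) := by
  rw [← h.card_biUnion_erase]
  congr 1
  refine Finset.Subset.antisymm (Finset.biUnion_subset.2 fun i _ x hx => ?_)
    (Finset.biUnion_mono fun i _ => Finset.erase_subset _ _)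
  simp only [Finset.mem_biUnion, Finset.mem_univ, true_and, Finset.mem_erase]
  by_cases hxv : x = v i
  · exact ⟨σ i, hxv ▸ h.injective.ne (h.apply_ne i).symm, hxv ▸ h.mem_next i⟩
  · exact ⟨i, hxv, hx⟩

-- The link leaving `I` towards its complement is a vertex that no `A i \ {v i}`, `i ∈ I`, contains.
theorem sum_card_sub_one_lt_card_biUnion [Finite ι] (h : IsCyclicChain σ A v) {I : Finset ι}
    (hne : I.Nonempty) (hI : (I : Set ι) ≠ Set.univ) :
    ∑ i ∈ I, ((A i).card - 1) < (I.biUnion A).card := by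
  obtain ⟨i, hi, hσi⟩ := exists_mem_apply_notMem_of_isCycle h.isCycle h.apply_ne hne hI
  rw [← h.card_biUnion_erase]
  refine Finset.card_lt_card (Finset.ssubset_iff_of_subset
    (Finset.biUnion_mono fun _ _ => Finset.erase_subset _ _) |>.2
    ⟨v i, Finset.mem_biUnion.2 ⟨i, hi, h.mem i⟩, fun hmem => ?_⟩)
  obtain ⟨j, hj, hvj⟩ := Finset.mem_biUnion.1 hmem
  obtain ⟨hvne, hvj⟩ := Finset.mem_erase.1 hvj
  have hij : i ≠ j := by rintro rfl; exact hvne rfl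
  rcases h.eq_link hij (h.mem i) hvj with ⟨-, hnext⟩ | ⟨hv, -⟩
  exacts [hσi (hnext ▸ hj), hvne hv]

end IsCyclicChain

variable {r : ℕ} {V : Type*} [DecidableEq V] {F : SimpleGraph (Fin r)} {C C₁ C₂ : FGraph V}

theorem isCyclicChain_of_inter_eq_pair {A B : Finset V} {x y : V} (hxy : x ≠ y)
    (hAB : A ∩ B = {x, y}) : IsCyclicChain (finRotate 2) ![A, B] ![x, y] := by
  have hmem : ∀ z, z ∈ A ∧ z ∈ B ↔ z = x ∨ z = y := fun z => by
    rw [← Finset.mem_inter, hAB, Finset.mem_insert, Finset.mem_singleton]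
  have hx := (hmem x).2 (.inl rfl)
  have hy := (hmem y).2 (.inr rfl)
  refine ⟨isCycle_finRotate, by decide, ?_, ?_, ?_, ?_⟩
  · simpa [Function.Injective, Fin.forall_fin_two, hxy] using hxy.symm
  · simp [Fin.forall_fin_two, hx, hy]
  · simp [Fin.forall_fin_two, hx, hy]
  · intro i j hij z hzi hzj
    fin_cases i <;> fin_cases j
    exacts [absurd rfl hij, ((hmem z).1 ⟨hzi, hzj⟩).imp (⟨·, rfl⟩) (⟨·, rfl⟩),
      ((hmem z).1 ⟨hzj, hzi⟩).symm.imp (⟨·, rfl⟩) (⟨·, rfl⟩), absurd rfl hij]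

theorem isCyclicChain_of_inter_eq_singleton {k : ℕ} (hk : 3 ≤ k) {A : Fin k → Finset V}
    {v : Fin k → V} (hv : Function.Injective v)
    (hadj : ∀ i j : Fin k, ((i : ℕ) + 1) % k = (j : ℕ) → A i ∩ A j = {v i})
    (hnonadj : ∀ i j : Fin k, i ≠ j → ((i : ℕ) + 1) % k ≠ (j : ℕ) → ((j : ℕ) + 1) % k ≠ (i : ℕ) →
      A i ∩ A j = ∅) :
    IsCyclicChain (finRotate k) A v := by
  have : NeZero k := ⟨by lia⟩
  have hnext : ∀ i j : Fin k, ((i : ℕ) + 1) % k = j ↔ finRotate k i = j := fun i j => by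
    rw [finRotate_apply, Fin.ext_iff, Fin.val_add, Fin.val_one', Nat.add_mod_mod]
  simp only [ne_eq, hnext] at hadj hnonadj
  have hlink : ∀ i, v i ∈ A i ∩ A (finRotate k i) := fun i => by
    rw [hadj i _ rfl]
    exact Finset.mem_singleton_self _
  refine ⟨isCycle_finRotate_of_le (by lia), fun i => ?_, hv,
    fun i => (Finset.mem_inter.1 (hlink i)).1, fun i => (Finset.mem_inter.1 (hlink i)).2,
    fun i j hij x hxi hxj => ?_⟩
  · rw [← Equiv.Perm.mem_support, support_finRotate_of_le (by lia)]
    exact Finset.mem_univ i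
  have hx : x ∈ A i ∩ A j := Finset.mem_inter.2 ⟨hxi, hxj⟩
  by_cases hj : finRotate k i = j
  · exact .inl ⟨by rwa [hadj i j hj, Finset.mem_singleton] at hx, hj⟩
  by_cases hi : finRotate k j = i
  · exact .inr ⟨by rwa [Finset.inter_comm, hadj j i hi, Finset.mem_singleton] at hx, hi⟩
  · simp [hnonadj i j hij hj hi] at hx

namespace IsCleanCycle

theorem wf (hC : IsCleanCycle F C) : C.Wf F :=
  hC.choose_spec.1

theorem verts_eq_sup (hC : IsCleanCycle F C) : C.1 = C.2.sup Prod.fst :=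
  hC.choose_spec.2.1

theorem exists_isCyclicChain (hC : IsCleanCycle F C) :
    ∃ (k : ℕ) (h : Fin k → FEdge V) (v : Fin k → V), Function.Injective h ∧
      C.2 = Finset.univ.image h ∧ IsCyclicChain (finRotate k) (fun i => (h i).1) v := by
  obtain ⟨k, -, -, ⟨-, h₁, h₂, hne, hC₂, hcard⟩ | ⟨hk, h, hinj, hC₂, v, hv, hadj, hnonadj⟩⟩ := hC
  · obtain ⟨x, y, hxy, hinter⟩ := Finset.card_eq_two.1 hcard
    refine ⟨2, ![h₁, h₂], ![x, y], ?_, ?_, ?_⟩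
    · simpa [Function.Injective, Fin.forall_fin_two, hne] using hne.symm
    · rw [hC₂]
      ext
      simp [eq_comm]
    · convert! isCyclicChain_of_inter_eq_pair hxy hinter using 1
      ext i : 1
      fin_cases i <;> rfl
  · exact ⟨k, h, v, hinj, hC₂, isCyclicChain_of_inter_eq_singleton hk hv hadj hnonadj⟩

theorem card_verts (hC : IsCleanCycle F C) : C.1.card = (r - 1) * C.2.card := by
  obtain ⟨k, h, v, hinj, hC₂, hchain⟩ := hC.exists_isCyclicChain
  have hcard : ∀ i, (h i).1.card = r := fun i => (hC.wf (h i) (by simp [hC₂])).1.card_verts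
  rw [hC.verts_eq_sup, hC₂, Finset.sup_image, Finset.sup_eq_biUnion,
    Finset.card_image_of_injective _ hinj]
  simpa [hcard, mul_comm, Function.comp_def] using hchain.card_biUnion_univ

theorem mul_card_lt_card_sup (hC : IsCleanCycle F C) {M : Finset (FEdge V)} (hM : M ⊂ C.2)
    (hne : M.Nonempty) : (r - 1) * M.card < (M.sup Prod.fst).card := by
  obtain ⟨k, h, v, hinj, hC₂, hchain⟩ := hC.exists_isCyclicChain
  have hcard : ∀ i, (h i).1.card = r := fun i => (hC.wf (h i) (by simp [hC₂])).1.card_verts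
  obtain ⟨I, -, rfl⟩ := Finset.subset_image_iff.1 (hC₂ ▸ hM.subset)
  have hI : (I : Set (Fin k)) ≠ Set.univ := by
    intro hI
    rw [Finset.coe_eq_univ] at hI
    exact hM.ne (hI ▸ hC₂.symm)
  rw [Finset.sup_image, Finset.sup_eq_biUnion, Finset.card_image_of_injective _ hinj]
  simpa [hcard, mul_comm, Function.comp_def] using
    hchain.sum_card_sub_one_lt_card_biUnion (Finset.image_nonempty.1 hne) hI

theorem mul_card_inter_lt (h₁ : IsCleanCycle F C₁) (h₂ : IsCleanCycle F C₂) (hne : C₁ ≠ C₂)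
    (hover : (C₁.1 ∩ C₂.1).Nonempty) :
    (r - 1) * (C₁.2 ∩ C₂.2).card < (C₁.1 ∩ C₂.1).card := by
  rcases (C₁.2 ∩ C₂.2).eq_empty_or_nonempty with hempty | hinter
  · simpa [hempty] using hover
  have hverts : (C₁.2 ∩ C₂.2).sup Prod.fst ⊆ C₁.1 ∩ C₂.1 := by
    rw [h₁.verts_eq_sup, h₂.verts_eq_sup]
    exact Finset.subset_inter (Finset.sup_mono Finset.inter_subset_left)
      (Finset.sup_mono Finset.inter_subset_right)
  have hproper : C₁.2 ∩ C₂.2 ⊂ C₁.2 ∨ C₁.2 ∩ C₂.2 ⊂ C₂.2 := by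
    by_contra! hall
    have hedges : C₁.2 = C₂.2 :=
      (Finset.inter_subset_left.eq_of_not_ssubset hall.1).symm.trans
        (Finset.inter_subset_right.eq_of_not_ssubset hall.2)
    exact hne (Prod.ext (by rw [h₁.verts_eq_sup, h₂.verts_eq_sup, hedges]) hedges)
  refine lt_of_lt_of_le ?_ (Finset.card_le_card hverts)
  rcases hproper with hproper | hproper
  exacts [h₁.mul_card_lt_card_sup hproper hinter, h₂.mul_card_lt_card_sup hproper hinter]

theorem card_verts_union_lt (h₁ : IsCleanCycle F C₁) (h₂ : IsCleanCycle F C₂) (hne : C₁ ≠ C₂)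
    (hover : (C₁.1 ∩ C₂.1).Nonempty) :
    (C₁.union C₂).1.card < (r - 1) * (C₁.union C₂).2.card := by
  have hverts := Finset.card_union_add_card_inter C₁.1 C₂.1
  have hedges := congrArg ((r - 1) * ·) (Finset.card_union_add_card_inter C₁.2 C₂.2)
  simp only [mul_add, ← h₁.card_verts, ← h₂.card_verts] at hedges
  have hinter := h₁.mul_card_inter_lt h₂ hne hover
  simp only [FGraph.union]
  lia

end IsCleanCycle

end CleanCycles

theorem overlapping_clean_cycles_bigO_general {r : ℕ} {V : Type*} [DecidableEq V]
    {F : SimpleGraph (Fin r)} {ε : ℝ} {π : ℕ → ℝ} (hπ0 : ∀ n, 0 ≤ π n)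
    (hπ : ∀ n : ℕ, π n ≤ (n : ℝ) ^ ε /
      (((r.factorial : ℝ) / (autCard F : ℝ)) * ((n - 1).choose (r - 1) : ℝ)))
    {C₁ C₂ : FGraph V} (h₁ : IsCleanCycle F C₁) (h₂ : IsCleanCycle F C₂)
    (hne : C₁ ≠ C₂) (hover : (C₁.1 ∩ C₂.1).Nonempty) :
    (fun n : ℕ => hfExp r n F (π n) fun S => (copyCount (C₁.union C₂) S : ℝ))
      =O[atTop] fun n : ℕ => (n : ℝ) ^ (-1 + (C₁.union C₂).2.card * ε) := by
  have hπO : π =O[atTop] fun n => (n : ℝ) ^ (ε - (r - 1 : ℕ)) :=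
    (isBigO_of_le _ fun n => by
      simpa only [Real.norm_of_nonneg (hπ0 n)] using (hπ n).trans (Real.le_norm_self _)).trans
      (isBigO_rpow_div_mul_choose_pred ε _ (r - 1))
  refine (isBigO_hfExp_copyCount (h₁.wf.union h₂.wf) hπO).trans (isBigO_natCast_rpow_of_le ?_)
  have hcard : ((C₁.union C₂).1.card : ℝ) + 1 ≤ (r - 1 : ℕ) * (C₁.union C₂).2.card :=
    mod_cast h₁.card_verts_union_lt h₂ hne hover
  linarith

/-- For two distinct, overlapping clean `F`-cycles `C₁, C₂` with at most
`e(F)` `F`-edges each, the expected number of copies of `C₁ ∪ C₂` in `H_F(n,π)` with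
`π ≤ n^ε/((r!/aut F)·C(n-1,r-1))` is `O(n^(-1+2e(F)ε))`. -/
theorem overlapping_clean_cycles_bigO {r : ℕ} (hr : 3 ≤ r) (F : SimpleGraph (Fin r))
    (hF : Strictly1Balanced F) (ε : ℝ) (hε : 0 < ε) (π : ℕ → ℝ) (hπ0 : ∀ n, 0 ≤ π n)
    (hπ : ∀ n : ℕ, π n ≤ (n : ℝ) ^ ε /
      (((r.factorial : ℝ) / (autCard F : ℝ)) * ((n - 1).choose (r - 1) : ℝ)))
    (C₁ C₂ : FGraph ℕ) (h₁ : IsCleanCycle F C₁) (h₂ : IsCleanCycle F C₂)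
    (hne : C₁ ≠ C₂) (he₁ : C₁.2.card ≤ edgeCnt F) (he₂ : C₂.2.card ≤ edgeCnt F)
    (hover : (C₁.1 ∩ C₂.1).Nonempty) :
    (fun n : ℕ => hfExp r n F (π n) fun S => (copyCount (FGraph.union C₁ C₂) S : ℝ))
      =O[Filter.atTop] fun n : ℕ => (n : ℝ) ^ (-1 + 2 * (edgeCnt F : ℝ) * ε) := by
  have hcard : ((C₁.union C₂).2.card : ℝ) ≤ 2 * edgeCnt F :=
    mod_cast (Finset.card_union_le _ _).trans ((add_le_add he₁ he₂).trans_eq (two_mul _).symm)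
  exact (overlapping_clean_cycles_bigO_general hπ0 hπ h₁ h₂ hne hover).trans
    (isBigO_natCast_rpow_of_le (by gcongr))

end
end
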